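/- arXiv:2401.03050 — 2 statements merged into one kernel-verified Lean document; each statement's English description precedes it below -/
import Mathlib

section
/- Let (Γ, M) be a boundary pair with M connected and not homeomorphic to the circle S¹, and let ρ : Γ → PGL_d(ℝ) be a relatively 1-Anosov representation with respect to (Γ, M), with limit maps ξ¹ : M → ℙ(ℝ^d) and ξ^{d−1} : M → ℙ((ℝ^d)*). Then ξ¹(M) is bounded in an affine chart of ℙ(ℝ^d): there exists a nonzero linear functional φ : ℝ^d → ℝ such that φ(v) ≠ 0 for every x ∈ M and every nonzero vector v spanning ξ¹(x). -/
open Filter Topology Matrix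

noncomputable instance projectivizationTopology
    {K V : Type*} [DivisionRing K] [AddCommGroup V] [Module K V] [TopologicalSpace V] :
    TopologicalSpace (Projectivization K V) :=
  inferInstanceAs (TopologicalSpace (Quotient _))

/-- `g n • z → a` locally uniformly on `M ∖ {b}`. -/
def ConvLocUnif {Γ M : Type} [SMul Γ M] [TopologicalSpace M]
    (g : ℕ → Γ) (a b : M) : Prop :=
  ∀ K : Set M, IsCompact K → b ∉ K →
    ∀ U ∈ 𝓝 a, ∀ᶠ n in atTop, ∀ z ∈ K, g n • z ∈ U

/-- The action of `Γ` on `M` is an action by homeomorphisms with the convergence property. -/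
def IsConvergenceAction (Γ M : Type) [Group Γ] [TopologicalSpace M] [MulAction Γ M] : Prop :=
  (∀ γ : Γ, Continuous fun x : M => γ • x) ∧
  ∀ g : ℕ → Γ, Function.Injective g →
    ∃ φ : ℕ → ℕ, StrictMono φ ∧ ∃ a b : M, ConvLocUnif (fun n => g (φ n)) a b

def IsConicalLimitPoint (Γ : Type) {M : Type} [Group Γ] [TopologicalSpace M]
    [MulAction Γ M] (x : M) : Prop :=
  ∃ a b : M, a ≠ b ∧ ∃ g : ℕ → Γ,
    Tendsto (fun n => g n • x) atTop (𝓝 a) ∧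
    ∀ y : M, y ≠ x → Tendsto (fun n => g n • y) atTop (𝓝 b)

def IsBoundedParabolicPoint (Γ : Type) {M : Type} [Group Γ] [TopologicalSpace M]
    [MulAction Γ M] (x : M) : Prop :=
  Infinite (MulAction.stabilizer Γ x) ∧
  (∀ y : M, (∀ γ ∈ MulAction.stabilizer Γ x, γ • y = y) → y = x) ∧
  (∃ K : Set M, IsCompact K ∧ x ∉ K ∧
    ∀ y : M, y ≠ x → ∃ γ ∈ MulAction.stabilizer Γ x, γ • y ∈ K)

/-- `(Γ, M)` is a boundary pair: `Γ` is a finitely generated group acting as a geometrically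
finite convergence group on the perfect compact metrizable space `M`. -/
structure IsBoundaryPair (Γ M : Type) [Group Γ] [TopologicalSpace M] [MulAction Γ M] : Prop where
  fg : Group.FG Γ
  compact : CompactSpace M
  metrizable : TopologicalSpace.MetrizableSpace M
  perfect : ∀ x : M, Filter.NeBot (𝓝[≠] x)
  conv : IsConvergenceAction Γ M
  gf : ∀ x : M, IsConicalLimitPoint Γ x ∨
    (IsBoundedParabolicPoint Γ x ∧ Group.FG (MulAction.stabilizer Γ x))

/-- The projective general linear group `PGL_d(ℝ)`. -/
abbrev ProjGL (d : ℕ) : Type := GL (Fin d) ℝ ⧸ Subgroup.center (GL (Fin d) ℝ)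

/-- A relatively 1-Anosov representation into `PGL_d(ℝ)`, recorded through its limit maps
`ξ : M → ℙ(ℝ^d)` and `ξs : M → ℙ((ℝ^d)*)` (a functional being recorded by the vector pairing
with it under the dot product); equivariance and dynamics are phrased via arbitrary lifts of
`ρ(γ)` to `GL_d(ℝ)`. -/
structure IsRelOneAnosovPGL {Γ M : Type} [Group Γ] [TopologicalSpace M] [MulAction Γ M]
    {d : ℕ} (ρ : Γ →* ProjGL d)
    (ξ : M → Projectivization ℝ (Fin d → ℝ))
    (ξs : M → Projectivization ℝ (Fin d → ℝ)) : Prop where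
  continuous_fst : Continuous ξ
  continuous_snd : Continuous ξs
  equivariant_fst : ∀ (γ : Γ) (g : GL (Fin d) ℝ), (g : ProjGL d) = ρ γ →
      ∀ (x : M) (v : Fin d → ℝ) (hv : v ≠ 0)
      (hgv : (g : Matrix (Fin d) (Fin d) ℝ) *ᵥ v ≠ 0),
      ξ x = Projectivization.mk ℝ v hv →
      ξ (γ • x) = Projectivization.mk ℝ ((g : Matrix (Fin d) (Fin d) ℝ) *ᵥ v) hgv
  equivariant_snd : ∀ (γ : Γ) (g : GL (Fin d) ℝ), (g : ProjGL d) = ρ γ →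
      ∀ (x : M) (φ : Fin d → ℝ) (hφ : φ ≠ 0)
      (hgφ : φ ᵥ* ((g⁻¹ : GL (Fin d) ℝ) : Matrix (Fin d) (Fin d) ℝ) ≠ 0),
      ξs x = Projectivization.mk ℝ φ hφ →
      ξs (γ • x) = Projectivization.mk ℝ
        (φ ᵥ* ((g⁻¹ : GL (Fin d) ℝ) : Matrix (Fin d) (Fin d) ℝ)) hgφ
  transverse : ∀ (x y : M), x ≠ y → ∀ (v φ : Fin d → ℝ) (hv : v ≠ 0) (hφ : φ ≠ 0),
      ξ x = Projectivization.mk ℝ v hv → ξs y = Projectivization.mk ℝ φ hφ → φ ⬝ᵥ v ≠ 0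
  dynamics : ∀ (γs : ℕ → Γ) (x y : M),
      (∀ z : M, z ≠ y → Tendsto (fun n => γs n • z) atTop (𝓝 x)) →
      (∀ z : M, z ≠ x → Tendsto (fun n => (γs n)⁻¹ • z) atTop (𝓝 y)) →
      ∀ gs : ℕ → GL (Fin d) ℝ, (∀ n, (gs n : ProjGL d) = ρ (γs n)) →
      ∀ (φ : Fin d → ℝ) (hφ : φ ≠ 0), ξs y = Projectivization.mk ℝ φ hφ →
      ∀ (u : Fin d → ℝ) (hu : ∀ n, (gs n : Matrix (Fin d) (Fin d) ℝ) *ᵥ u ≠ 0),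
        φ ⬝ᵥ u ≠ 0 →
        Tendsto (fun n => Projectivization.mk ℝ ((gs n : Matrix (Fin d) (Fin d) ℝ) *ᵥ u) (hu n))
          atTop (𝓝 (ξ x))

/-- The unit circle `S¹`. -/
abbrev Circle1 : Type := Metric.sphere (0 : EuclideanSpace ℝ (Fin 2)) 1

/-!
If `ξ x` lies off the dual hyperplane of some `x`, transversality puts all of `ξ(M)` off that
hyperplane. Otherwise `ξ` embeds `M` as a compact connected set `K` which meets the dual hyperplane
of `x` exactly in `ξ x`. On the double cover of `K` in the unit sphere each such hyperplane is the
zero set of a functional `f`, vanishing only at the two lifts `±v` of `ξ x`. If `v` is not a limit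
of points with `f > 0`, then `f - ε ψ` with `ψ v = 1` and small `ε > 0` has no zero on `K`.
If this never happens, fix one point: the part `H` of the cover where its functional is nonnegative
is `K` with that point doubled into `v` and `-v`. Every other point of `H` is a cut point separating
`v` from `-v`, and is a limit of both sides of the cut. A clopen subset of `H` containing only one
of `v`, `-v` would be connected, hence have another non-cut point, which is absurd; so `H` is
connected. Therefore `H` is an arc from `v` to `-v`, and `K`, obtained by gluing its endpoints, is a
circle.
-/

section Cuts

variable {Y Z : Type*} [TopologicalSpace Y] [TopologicalSpace Z] {y : Y} {U V : Set Y}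

/-- `U` and `V` form a cut of the space at the point `y`: they are disjoint open sets with
`U ∪ V = {y}ᶜ`. Either side may be empty, so that a point which does not disconnect the space
still has the trivial cuts with sides `∅` and `{y}ᶜ`. -/
structure IsCut (y : Y) (U V : Set Y) : Prop where
  isOpen_left : IsOpen U
  isOpen_right : IsOpen V
  disjoint : Disjoint U V
  union_eq : U ∪ V = {y}ᶜ

namespace IsCut

theorem symm (h : IsCut y U V) : IsCut y V U :=
  ⟨h.isOpen_right, h.isOpen_left, h.disjoint.symm, Set.union_comm V U ▸ h.union_eq⟩

theorem notMem_left (h : IsCut y U V) : y ∉ U := fun hy =>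
  (h.union_eq ▸ Set.mem_union_left V hy : y ∈ ({y}ᶜ : Set Y)) rfl

theorem notMem_right (h : IsCut y U V) : y ∉ V := h.symm.notMem_left

theorem mem_or_mem (h : IsCut y U V) {z : Y} (hz : z ≠ y) : z ∈ U ∨ z ∈ V :=
  (h.union_eq.symm ▸ hz : z ∈ U ∪ V)

theorem mem_left (h : IsCut y U V) {z : Y} (hzy : z ≠ y) (hz : z ∉ V) : z ∈ U :=
  (h.mem_or_mem hzy).resolve_right hz

theorem mem_right (h : IsCut y U V) {z : Y} (hzy : z ≠ y) (hz : z ∉ U) : z ∈ V :=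
  h.symm.mem_left hzy hz

theorem subset_compl_right (h : IsCut y U V) : U ⊆ Vᶜ := h.disjoint.subset_compl_right

theorem preimage (h : IsCut y U V) {f : Z → Y} (hf : Continuous f) (hinj : f.Injective) {z : Z}
    (hz : f z = y) : IsCut z (f ⁻¹' U) (f ⁻¹' V) where
  isOpen_left := h.isOpen_left.preimage hf
  isOpen_right := h.isOpen_right.preimage hf
  disjoint := h.disjoint.preimage f
  union_eq := by
    subst hz
    rw [← Set.preimage_union, h.union_eq, Set.preimage_compl, ← Set.image_singleton,
      hinj.preimage_image]

theorem not_isPreconnected_compl (h : IsCut y U V) (hU : U.Nonempty) (hV : V.Nonempty) :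
    ¬ IsPreconnected ({y}ᶜ : Set Y) := by
  intro hpre
  have hUy : U ⊆ {y}ᶜ := h.union_eq ▸ Set.subset_union_left
  have hVy : V ⊆ {y}ᶜ := h.union_eq ▸ Set.subset_union_right
  obtain ⟨z, -, hzU, hzV⟩ := hpre U V h.isOpen_left h.isOpen_right h.union_eq.ge
    (by rwa [Set.inter_eq_right.2 hUy]) (by rwa [Set.inter_eq_right.2 hVy])
  exact Set.disjoint_left.1 h.disjoint hzU hzV

theorem exists_of_not_isPreconnected_compl [T1Space Y]
    (h : ¬ IsPreconnected ({y}ᶜ : Set Y)) :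
    ∃ U V : Set Y, IsCut y U V ∧ U.Nonempty ∧ V.Nonempty := by
  rw [isPreconnected_iff_subset_of_disjoint] at h
  push Not at h
  obtain ⟨U, V, hU, hV, hUV, hdisj, hnU, hnV⟩ := h
  obtain ⟨u, hu, huU⟩ := Set.not_subset.1 hnV
  obtain ⟨v, hv, hvV⟩ := Set.not_subset.1 hnU
  refine ⟨{y}ᶜ ∩ U, {y}ᶜ ∩ V, ⟨isOpen_compl_singleton.inter hU, isOpen_compl_singleton.inter hV,
    ?_, ?_⟩, ⟨u, hu, (hUV hu).resolve_right huU⟩, ⟨v, hv, (hUV hv).resolve_left hvV⟩⟩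
  · rw [Set.disjoint_iff_inter_eq_empty, ← Set.inter_inter_distrib_left, hdisj]
  · rw [← Set.inter_union_distrib_left, Set.inter_eq_left.2 hUV]

/-- The map collapsing `U` to `y` is a retraction of `Y` onto `Uᶜ`. -/
theorem isPreconnected_compl_left [PreconnectedSpace Y] (h : IsCut y U V) :
    IsPreconnected Uᶜ := by
  classical
  have frontier_subset : frontier U ⊆ {y} := by
    intro z hz
    by_contra hzy
    rcases h.mem_or_mem hzy with hzU | hzV
    · exact hz.2 (h.isOpen_left.interior_eq.symm ▸ hzU)
    · exact Set.disjoint_left.1 (h.disjoint.closure_left h.isOpen_right) hz.1 hzV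
  have collapse_continuous : Continuous (U.piecewise (fun _ => y) id) :=
    continuous_const.piecewise (fun z hz => (frontier_subset hz).symm) continuous_id
  convert isPreconnected_univ.image _ collapse_continuous.continuousOn
  ext z
  simp only [Set.mem_compl_iff, Set.image_univ, Set.mem_range]
  constructor
  · exact fun hz => ⟨z, by simp [hz]⟩
  · rintro ⟨w, rfl⟩
    by_cases hw : w ∈ U
    · simpa only [hw, Set.piecewise_eq_of_mem] using h.notMem_left
    · rwa [Set.piecewise_eq_of_notMem _ _ _ hw]

theorem compl_right_subset [PreconnectedSpace Y] {x a : Y} {U' V' : Set Y} (h : IsCut x U V)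
    (h' : IsCut y U' V') (ha : a ∉ U) (ha' : a ∈ V') (hy : y ∈ U) : V'ᶜ ⊆ U := by
  refine Set.compl_subset_comm.1 (h.isPreconnected_compl_left.subset_right_of_subset_union
    h'.isOpen_left h'.isOpen_right h'.disjoint ?_ ⟨a, ha, ha'⟩)
  rw [h'.union_eq]
  exact Set.compl_subset_compl.2 (Set.singleton_subset_iff.2 hy)

end IsCut

theorem nonempty_sInter_of_isChain_isClosed [CompactSpace Y] {c : Set (Set Y)}
    (hne : c.Nonempty) (hchain : IsChain (· ⊆ ·) c) (hcl : ∀ C ∈ c, IsClosed C)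
    (hc : ∀ C ∈ c, C.Nonempty) : (⋂₀ c).Nonempty := by
  have : Nonempty c := hne.to_subtype
  have hchain' : IsChain (· ⊇ ·) c := hchain.symm
  exact IsCompact.nonempty_sInter_of_directed_nonempty_isCompact_isClosed hchain'.directedOn hc
    (fun C hC => (hcl C hC).isCompact) hcl

/-- A minimal `(V x)ᶜ` exists by compactness, and any `y ∈ U x` would give a smaller `(V y)ᶜ`. -/
theorem exists_ne_eq_empty_of_forall_isCut [CompactSpace Y] [PreconnectedSpace Y] [Nontrivial Y]
    (a : Y) {U V : Y → Set Y} (hcut : ∀ x, x ≠ a → IsCut x (U x) (V x))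
    (ha : ∀ x, x ≠ a → a ∈ V x) : ∃ x, x ≠ a ∧ U x = ∅ := by
  have compl_subset {x y : Y} (hx : x ≠ a) (hy : y ∈ U x) : y ≠ a ∧ (V y)ᶜ ⊆ U x := by
    have haU : a ∉ U x := (hcut x hx).symm.subset_compl_right (ha x hx)
    have hya : y ≠ a := fun h => haU (h ▸ hy)
    exact ⟨hya, (hcut x hx).compl_right_subset (hcut y hya) haU (ha y hya) hy⟩
  let S : Set (Set Y) := (fun x => (V x)ᶜ) '' {a}ᶜ
  have chain_bounded : ∀ c ⊆ S, IsChain (· ⊆ ·) c → c.Nonempty → ∃ C ∈ S, ∀ D ∈ c, C ⊆ D := by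
    intro c hcS hchain hne
    obtain ⟨z, hz⟩ := nonempty_sInter_of_isChain_isClosed hne hchain
      (fun C hC => by
        obtain ⟨x, hx, rfl⟩ := hcS hC
        exact (hcut x hx).isOpen_right.isClosed_compl)
      (fun C hC => by
        obtain ⟨x, hx, rfl⟩ := hcS hC
        exact ⟨x, (hcut x hx).notMem_right⟩)
    have hza : z ≠ a := by
      rintro rfl
      obtain ⟨C, hC⟩ := hne
      obtain ⟨x, hx, rfl⟩ := hcS hC
      exact hz _ hC (ha x hx)
    refine ⟨_, ⟨z, hza, rfl⟩, fun C hC => ?_⟩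
    obtain ⟨x, hx, rfl⟩ := hcS hC
    rcases eq_or_ne z x with rfl | hzx
    · exact subset_rfl
    · have hzU : z ∈ U x := (hcut x hx).mem_left hzx (hz _ hC)
      exact (compl_subset hx hzU).2.trans (hcut x hx).subset_compl_right
  obtain ⟨b, hb⟩ := exists_ne a
  obtain ⟨_, -, ⟨⟨x, hx, rfl⟩, hmin⟩⟩ := zorn_superset_nonempty S chain_bounded _ ⟨b, hb, rfl⟩
  refine ⟨x, hx, Set.eq_empty_of_forall_notMem fun y hy => ?_⟩
  obtain ⟨hya, hsub⟩ := compl_subset hx hy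
  exact (hcut x hx).notMem_left (hsub (hmin ⟨y, hya, rfl⟩
    (hsub.trans (hcut x hx).subset_compl_right) (hcut x hx).notMem_right))

theorem exists_ne_isPreconnected_compl_singleton [CompactSpace Y] [PreconnectedSpace Y]
    [T1Space Y] [Nontrivial Y] (a : Y) : ∃ y, y ≠ a ∧ IsPreconnected ({y}ᶜ : Set Y) := by
  by_contra! hdisc
  have cut_away : ∀ x, ∃ U V : Set Y, x ≠ a → IsCut x U V ∧ U.Nonempty ∧ a ∈ V := by
    intro x
    by_cases hx : x = a
    · exact ⟨∅, ∅, fun h => absurd hx h⟩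
    obtain ⟨U, V, h, hU, hV⟩ := IsCut.exists_of_not_isPreconnected_compl (hdisc x hx)
    rcases h.mem_or_mem (Ne.symm hx) with ha | ha
    · exact ⟨V, U, fun _ => ⟨h.symm, hV, ha⟩⟩
    · exact ⟨U, V, fun _ => ⟨h, hU, ha⟩⟩
  choose U V hUV using cut_away
  obtain ⟨x, hx, hUx⟩ := exists_ne_eq_empty_of_forall_isCut a (fun x hx => (hUV x hx).1)
    (fun x hx => (hUV x hx).2.2)
  exact (hUV x hx).2.1.ne_empty hUx

end Cuts

section Arcs

variable {X : Type*} [TopologicalSpace X]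

theorem orderClosedTopology_of_isOpen_Iio_Ioi [LinearOrder X]
    (hIio : ∀ a : X, IsOpen (Set.Iio a)) (hIoi : ∀ a : X, IsOpen (Set.Ioi a)) :
    OrderClosedTopology X := by
  refine ⟨isOpen_compl_iff.1 (isOpen_iff_mem_nhds.2 ?_)⟩
  rintro ⟨b, a⟩ hab
  replace hab : a < b := not_le.1 hab
  rw [nhds_prod_eq]
  by_cases hmid : ∃ c, a < c ∧ c < b
  · obtain ⟨c, hac, hcb⟩ := hmid
    filter_upwards [prod_mem_prod ((hIoi c).mem_nhds hcb) ((hIio c).mem_nhds hac)]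
      with z hz using not_le.2 (hz.2.trans hz.1)
  · push Not at hmid
    filter_upwards [prod_mem_prod ((hIoi a).mem_nhds hab) ((hIio b).mem_nhds hab)]
      with z hz using not_le.2 (lt_of_lt_of_le hz.2 (hmid _ hz.1))

theorem continuous_infDist_Iic {X : Type*} [PseudoMetricSpace X] [CompactSpace X] [LinearOrder X]
    [OrderClosedTopology X] (d : X) : Continuous fun y => Metric.infDist d (Set.Iic y) := by
  have sInf_eq (y : X) :
      Metric.infDist d (Set.Iic y) = sInf ((fun t => dist d (min t y)) '' Set.univ) := by
    have himage : (fun t => min t y) '' Set.univ = Set.Iic y := by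
      ext z
      simp only [Set.image_univ, Set.mem_range, Set.mem_Iic]
      exact ⟨fun ⟨t, ht⟩ => ht ▸ min_le_right t y, fun hz => ⟨z, min_eq_left hz⟩⟩
    rw [Metric.infDist_eq_iInf, ← sInf_image', ← himage, Set.image_image]
  simp_rw [sInf_eq]
  exact isCompact_univ.continuous_sInf
    (continuous_const.dist (continuous_snd.min continuous_fst))

/-- For a dense sequence `u`, the functions `y ↦ infDist (u n) (Iic y)` are continuous, antitone,
and jointly separate points. -/
theorem exists_continuous_strictMono [LinearOrder X] [OrderClosedTopology X] [CompactSpace X]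
    [TopologicalSpace.MetrizableSpace X] : ∃ e : X → ℝ, Continuous e ∧ StrictMono e := by
  let : MetricSpace X := TopologicalSpace.metrizableSpaceMetric X
  rcases isEmpty_or_nonempty X with _ | _
  · exact ⟨fun _ => 0, continuous_const, fun x => isEmptyElim x⟩
  obtain ⟨u, hu⟩ := TopologicalSpace.exists_dense_seq X
  let F (n : ℕ) (y : X) : ℝ := (1 / 2) ^ n * Metric.infDist (u n) (Set.Iic y)
  have F_antitone (n : ℕ) : Antitone (F n) := fun x y hxy =>
    mul_le_mul_of_nonneg_left (Metric.infDist_le_infDist_of_subset (Set.Iic_subset_Iic.2 hxy)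
      Set.nonempty_Iic) (by positivity)
  have F_bound (n : ℕ) (y : X) : ‖F n y‖ ≤ (1 / 2) ^ n * Metric.diam (Set.univ : Set X) := by
    rw [Real.norm_of_nonneg (mul_nonneg (by positivity) Metric.infDist_nonneg)]
    gcongr
    exact (Metric.infDist_le_dist_of_mem Set.self_mem_Iic).trans
      (Metric.dist_le_diam_of_mem isCompact_univ.isBounded trivial trivial)
  have bound_summable :
      Summable fun n : ℕ => (1 / 2 : ℝ) ^ n * Metric.diam (Set.univ : Set X) :=
    summable_geometric_two.mul_right _
  have F_summable (y : X) : Summable fun n => F n y :=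
    bound_summable.of_norm_bounded fun n => F_bound n y
  refine ⟨fun y => -∑' n, F n y, (continuous_tsum (fun n =>
    continuous_const.mul (continuous_infDist_Iic (u n))) bound_summable F_bound).neg, ?_⟩
  intro x y hxy
  have y_far : 0 < Metric.infDist y (Set.Iic x) :=
    (isClosed_Iic.notMem_iff_infDist_pos Set.nonempty_Iic).1 (not_le.2 hxy)
  obtain ⟨n, hn⟩ := hu.exists_dist_lt y (half_pos y_far)
  have F_lt : F n y < F n x := by
    refine mul_lt_mul_of_pos_left ?_ (by positivity)
    have h_near : Metric.infDist (u n) (Set.Iic y) ≤ dist y (u n) :=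
      dist_comm y (u n) ▸ Metric.infDist_le_dist_of_mem Set.self_mem_Iic
    have h_far : Metric.infDist y (Set.Iic x) ≤ Metric.infDist (u n) (Set.Iic x) + dist y (u n) :=
      Metric.infDist_le_infDist_add_dist
    linarith
  exact neg_lt_neg
    ((F_summable y).tsum_lt_tsum (fun m => F_antitone m hxy.le) F_lt (F_summable x))

theorem exists_homeomorph_unitInterval_of_isBot_isTop [LinearOrder X] [OrderClosedTopology X]
    [CompactSpace X] [TopologicalSpace.MetrizableSpace X] [PreconnectedSpace X] {p q : X}
    (hpq : p ≠ q) (hp : IsBot p) (hq : IsTop q) :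
    ∃ e : X ≃ₜ unitInterval, e p = 0 ∧ e q = 1 := by
  obtain ⟨e, he_cont, he_mono⟩ := exists_continuous_strictMono (X := X)
  have hlt : e p < e q := he_mono ((hp q).lt_of_ne hpq)
  have range_eq : Set.range e = Set.Icc (e p) (e q) := by
    refine subset_antisymm ?_ (intermediate_value_univ p q he_cont)
    rintro _ ⟨x, rfl⟩
    exact ⟨he_mono.monotone (hp x), he_mono.monotone (hq x)⟩
  let E : X ≃ₜ unitInterval :=
    ((he_cont.isClosedEmbedding he_mono.injective).isEmbedding.toHomeomorph.trans
      (Homeomorph.setCongr range_eq)).trans (iccHomeoI (e p) (e q) hlt)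
  have E_apply (x : X) : (E x : ℝ) = (e x - e p) / (e q - e p) := iccHomeoI_apply_coe _ _ hlt _
  exact ⟨E, Subtype.ext (by simp [E_apply]),
    Subtype.ext ((E_apply q).trans (div_self (sub_pos.2 hlt).ne'))⟩

/-- The points are ordered by `x < y ↔ x ∈ U`, where `U` is the side of `p` in the cut at `y`. -/
theorem exists_homeomorph_unitInterval_of_forall_isCut [CompactSpace X]
    [TopologicalSpace.MetrizableSpace X] [PreconnectedSpace X] {p q : X} (hpq : p ≠ q)
    (hcut : ∀ y, ∃ U V : Set X, IsCut y U V ∧ p ∉ V ∧ q ∉ U) :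
    ∃ e : X ≃ₜ unitInterval, e p = 0 ∧ e q = 1 := by
  classical
  choose U V hUV hpV hqU using hcut
  have compl_subset {x y : X} (hx : x ∈ U y) : (V x)ᶜ ⊆ U y := by
    have hxq : x ≠ q := fun h => hqU y (h ▸ hx)
    exact (hUV y).compl_right_subset (hUV x) (hqU y) ((hUV x).mem_right hxq.symm (hqU x)) hx
  have compl_subset' {x y : X} (hx : x ∈ V y) : (U x)ᶜ ⊆ V y := by
    have hxp : x ≠ p := fun h => hpV y (h ▸ hx)
    exact (hUV y).symm.compl_right_subset (hUV x).symm (hpV y)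
      ((hUV x).mem_left hxp.symm (hpV x)) hx
  have mem_V_iff {x y : X} : x ∈ V y ↔ y ∈ U x :=
    ⟨fun hx => by_contra fun hy => (hUV y).notMem_right (compl_subset' hx hy),
      fun hy => by_contra fun hx => (hUV x).notMem_left (compl_subset hy hx)⟩
  have : IsStrictTotalOrder X (fun x y => x ∈ U y) :=
    { trichotomous := fun x y hxy hyx => by_contra fun hne =>
        ((hUV y).mem_or_mem hne).elim hxy fun hx => hyx (mem_V_iff.1 hx)
      irrefl := fun x => (hUV x).notMem_left
      trans := fun x y z hx hy => compl_subset hy ((hUV y).subset_compl_right hx) }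
  let : LinearOrder X := linearOrderOfSTO (fun x y => x ∈ U y)
  have Ioi_eq (y : X) : Set.Ioi y = V y := Set.ext fun x => mem_V_iff.symm
  have : OrderClosedTopology X := orderClosedTopology_of_isOpen_Iio_Ioi
    (fun y => (hUV y).isOpen_left) (fun y => Ioi_eq y ▸ (hUV y).isOpen_right)
  exact exists_homeomorph_unitInterval_of_isBot_isTop hpq
    (fun y => not_lt.1 fun hy => (hUV p).notMem_left (compl_subset hy (hpV y)))
    (fun y => not_lt.1 (hqU y))

end Arcs

section Circles

variable {X Z : Type*} [TopologicalSpace X] [TopologicalSpace Z] {p q : X} {g : X → Z}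

/-- The only identification made by `g` is that of the points `p` and `q`. -/
def IdentifiesOnly {X Z : Type*} (g : X → Z) (p q : X) : Prop :=
  ∀ x y, g x = g y ↔ x = y ∨ s(x, y) = s(p, q)

theorem nonempty_addCircle_homeomorph_circle1 :
    Nonempty (AddCircle (1 : ℝ) ≃ₜ Circle1) := by
  let toPlane : ℂ ≃ₗᵢ[ℝ] EuclideanSpace ℝ (Fin 2) := Complex.orthonormalBasisOneI.repr
  let toCircle1 : Circle ≃ₜ Circle1 := toPlane.toHomeomorph.subtype fun z => by
    change z ∈ Metric.sphere 0 1 ↔ toPlane z ∈ Metric.sphere 0 1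
    simp only [mem_sphere_zero_iff_norm, LinearIsometryEquiv.norm_map]
  exact ⟨(AddCircle.homeomorphCircle one_ne_zero).trans toCircle1⟩

theorem coe_addCircle_eq_coe_iff_of_mem_unitInterval (s t : unitInterval) :
    ((s : ℝ) : AddCircle (1 : ℝ)) = ((t : ℝ) : AddCircle (1 : ℝ)) ↔
      s = t ∨ s(s, t) = s(0, 1) := by
  rw [← sub_eq_zero, ← AddCircle.coe_sub, AddCircle.coe_eq_zero_iff, Sym2.eq_iff]
  simp only [zsmul_eq_mul, mul_one, Subtype.ext_iff, Set.Icc.coe_zero, Set.Icc.coe_one]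
  obtain ⟨hs0, hs1⟩ := s.2
  obtain ⟨ht0, ht1⟩ := t.2
  constructor
  · rintro ⟨n, hn⟩
    have hn_lower : (-2 : ℝ) < n := by linarith
    have hn_upper : (n : ℝ) < 2 := by linarith
    obtain rfl | rfl | rfl : n = -1 ∨ n = 0 ∨ n = 1 := by
      have : -2 < n := by exact_mod_cast hn_lower
      have : n < 2 := by exact_mod_cast hn_upper
      omega
    · push_cast at hn
      exact Or.inr (Or.inl ⟨by linarith, by linarith⟩)
    · push_cast at hn
      exact Or.inl (by linarith)
    · push_cast at hn
      exact Or.inr (Or.inr ⟨by linarith, by linarith⟩)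
  · rintro (h | ⟨h₀, h₁⟩ | ⟨h₁, h₀⟩)
    · exact ⟨0, by simp [h]⟩
    · exact ⟨-1, by simp [h₀, h₁]⟩
    · exact ⟨1, by simp [h₀, h₁]⟩

theorem exists_isQuotientMap_circle1_identifiesOnly :
    ∃ c : unitInterval → Circle1, IsQuotientMap c ∧ IdentifiesOnly c 0 1 := by
  obtain ⟨h⟩ := nonempty_addCircle_homeomorph_circle1
  let c : unitInterval → AddCircle (1 : ℝ) := fun t => ((t : ℝ) : AddCircle (1 : ℝ))
  have c_continuous : Continuous c := (AddCircle.continuous_mk' 1).comp continuous_subtype_val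
  have c_surjective : Function.Surjective c := by
    intro z
    have hz : z ∈ ((↑) : ℝ → AddCircle (1 : ℝ)) '' Set.Icc 0 (0 + 1) :=
      (AddCircle.coe_image_Icc_eq 1 0).ge trivial
    obtain ⟨t, ht, rfl⟩ := hz
    exact ⟨⟨t, by rwa [zero_add] at ht⟩, rfl⟩
  exact ⟨h ∘ c, .of_surjective_continuous (h.surjective.comp c_surjective)
    (h.continuous.comp c_continuous), fun s t =>
      h.injective.eq_iff.trans (coe_addCircle_eq_coe_iff_of_mem_unitInterval s t)⟩

theorem nonempty_homeomorph_of_isQuotientMap {Y W : Type*} [TopologicalSpace Y]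
    [TopologicalSpace W] {f : Y → W} (hg : IsQuotientMap g) (hf : IsQuotientMap f) (e : X ≃ₜ Y)
    (hker : ∀ x y, g x = g y ↔ f (e x) = f (e y)) : Nonempty (Z ≃ₜ W) :=
  ⟨(hg.homeomorph (f := ⟨g, hg.continuous⟩)).symm.trans
    ((Homeomorph.Quotient.congr e hker).trans (hf.homeomorph (f := ⟨f, hf.continuous⟩)))⟩

theorem nonempty_homeomorph_circle1_of_identifiesOnly (hg : IsQuotientMap g)
    (hpq : IdentifiesOnly g p q) (e : X ≃ₜ unitInterval) (hp : e p = 0) (hq : e q = 1) :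
    Nonempty (Z ≃ₜ Circle1) := by
  obtain ⟨c, hc, hc01⟩ := exists_isQuotientMap_circle1_identifiesOnly
  refine nonempty_homeomorph_of_isQuotientMap hg hc e fun x y => ?_
  rw [hpq, hc01, ← hp, ← hq, e.injective.eq_iff, ← Sym2.map_mk, ← Sym2.map_mk,
    (Sym2.map.injective e.injective).eq_iff]

theorem eq_empty_or_univ_of_isClopen_of_saturated [PreconnectedSpace Z] (hg : IsQuotientMap g)
    {A : Set X} (hA : IsClopen A) (hsat : ∀ x y, g x = g y → x ∈ A → y ∈ A) :
    A = ∅ ∨ A = Set.univ := by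
  have preimage_image : g ⁻¹' (g '' A) = A :=
    (Set.subset_preimage_image g A).antisymm' fun y ⟨x, hx, hxy⟩ => hsat x y hxy hx
  have : IsClopen (g '' A) := hg.isClopen_preimage.1 (preimage_image.symm ▸ hA)
  rcases isClopen_iff.1 this with h | h
  · exact Or.inl (Set.image_eq_empty.1 h)
  · exact Or.inr (by rw [← preimage_image, h, Set.preimage_univ])

theorem IdentifiesOnly.eq_empty_or_univ_of_isClopen [PreconnectedSpace Z]
    (hpq : IdentifiesOnly g p q) (hg : IsQuotientMap g) {A : Set X} (hA : IsClopen A)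
    (h : p ∈ A ↔ q ∈ A) : A = ∅ ∨ A = Set.univ := by
  refine eq_empty_or_univ_of_isClopen_of_saturated hg hA fun x y hxy hx => ?_
  rcases (hpq x y).1 hxy with rfl | hs
  · exact hx
  · rcases Sym2.eq_iff.1 hs with ⟨rfl, rfl⟩ | ⟨rfl, rfl⟩
    exacts [h.1 hx, h.2 hx]

theorem IdentifiesOnly.preconnectedSpace_of_isClopen [PreconnectedSpace Z]
    (hpq : IdentifiesOnly g p q) (hg : IsQuotientMap g) {B : Set X} (hB : IsClopen B)
    (hq : q ∉ B) : PreconnectedSpace B := by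
  have eq_empty {s : Set B} (hs : IsClopen s) (hp : p ∉ Subtype.val '' s) : s = ∅ := by
    have hs' : IsClopen (Subtype.val '' s) :=
      ⟨hB.isClosed.isClosedMap_subtype_val s hs.isClosed,
        hB.isOpen.isOpenMap_subtype_val s hs.isOpen⟩
    have hqs : q ∉ Subtype.val '' s := fun h => hq (Subtype.coe_image_subset B s h)
    rcases hpq.eq_empty_or_univ_of_isClopen hg hs' (iff_of_false hp hqs) with h | h
    · exact Set.image_eq_empty.1 h
    · exact absurd (h ▸ Set.mem_univ q) hqs
  refine preconnectedSpace_iff_clopen.2 fun s hs => ?_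
  by_cases hp : p ∈ Subtype.val '' s
  · refine Or.inr (Set.compl_empty_iff.1 (eq_empty hs.compl ?_))
    obtain ⟨p, hps, rfl⟩ := hp
    rwa [Subtype.coe_injective.mem_set_image, Set.notMem_compl_iff]
  · exact Or.inl (eq_empty hs hp)

theorem IdentifiesOnly.preconnectedSpace [PreconnectedSpace Z] [CompactSpace X] [T1Space X]
    (hpq : IdentifiesOnly g p q) (hg : IsQuotientMap g) [NeBot (𝓝[≠] p)]
    (hcut : ∀ y, y ≠ p → y ≠ q → ∃ U V, IsCut y U V ∧ p ∈ U ∧ y ∈ closure V) :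
    PreconnectedSpace X := by
  have p_iff_q {B : Set X} (hB : IsClopen B) (hp : p ∈ B) : q ∈ B := by
    by_contra hq
    have := hpq.preconnectedSpace_of_isClopen hg hB hq
    have : CompactSpace B := isCompact_iff_compactSpace.1 hB.isClosed.isCompact
    obtain ⟨z, hzp, hz⟩ : ({p}ᶜ ∩ B).Nonempty :=
      nonempty_of_mem (inter_mem_nhdsWithin _ (hB.isOpen.mem_nhds hp))
    have : Nontrivial B := ⟨⟨z, hz⟩, ⟨p, hp⟩, fun h => hzp (congrArg Subtype.val h)⟩
    obtain ⟨⟨y, hy⟩, hyp, hpre⟩ := exists_ne_isPreconnected_compl_singleton (⟨p, hp⟩ : B)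
    obtain ⟨U, V, hUV, hpU, hyV⟩ := hcut y (fun h => hyp (Subtype.ext h)) (fun h => hq (h ▸ hy))
    obtain ⟨v, hvB, hv⟩ := mem_closure_iff.1 hyV B hB.isOpen hy
    exact (hUV.preimage continuous_subtype_val Subtype.val_injective
      (z := ⟨y, hy⟩) rfl).not_isPreconnected_compl ⟨⟨p, hp⟩, hpU⟩ ⟨⟨v, hvB⟩, hv⟩ hpre
  exact preconnectedSpace_iff_clopen.2 fun B hB =>
    hpq.eq_empty_or_univ_of_isClopen hg hB ⟨p_iff_q hB, fun hq => by_contra fun hp =>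
      p_iff_q hB.compl hp hq⟩

theorem IdentifiesOnly.nonempty_homeomorph_circle1 [PreconnectedSpace Z] [CompactSpace X]
    [TopologicalSpace.MetrizableSpace X] (hpq : IdentifiesOnly g p q) (hg : IsQuotientMap g)
    (hne : p ≠ q) [NeBot (𝓝[≠] p)]
    (hcut : ∀ y, y ≠ p → y ≠ q → ∃ U V, IsCut y U V ∧ p ∈ U ∧ q ∈ V ∧ y ∈ closure V) :
    Nonempty (Z ≃ₜ Circle1) := by
  have : PreconnectedSpace X := hpq.preconnectedSpace hg fun y hyp hyq => by
    obtain ⟨U, V, hUV, hp, -, hy⟩ := hcut y hyp hyq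
    exact ⟨U, V, hUV, hp, hy⟩
  obtain ⟨e, hp, hq⟩ := exists_homeomorph_unitInterval_of_forall_isCut hne fun y => by
    rcases eq_or_ne y p with rfl | hyp
    · exact ⟨∅, {y}ᶜ, ⟨isOpen_empty, isOpen_compl_singleton, Set.empty_disjoint _,
        Set.empty_union _⟩, fun h => h rfl, Set.notMem_empty q⟩
    rcases eq_or_ne y q with rfl | hyq
    · exact ⟨{y}ᶜ, ∅, ⟨isOpen_compl_singleton, isOpen_empty, Set.disjoint_empty _,
        Set.union_empty _⟩, Set.notMem_empty p, fun h => h rfl⟩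
    obtain ⟨U, V, hUV, hp, hq, -⟩ := hcut y hyp hyq
    exact ⟨U, V, hUV, hUV.subset_compl_right hp, hUV.symm.subset_compl_right hq⟩
  exact nonempty_homeomorph_circle1_of_identifiesOnly hg hpq e hp hq

end Circles

section ProjectiveSpace

open LinearAlgebra.Projectivization

variable {V : Type*} [NormedAddCommGroup V] [NormedSpace ℝ V]

/-- The projective hyperplane cut out by a continuous linear functional (all of `ℙ ℝ V` if the
functional is zero). -/
def hyperplane (f : StrongDual ℝ V) : Set (ℙ ℝ V) :=
  {k | k.submodule ≤ LinearMap.ker f.toLinearMap}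

theorem mk_mem_hyperplane {f : StrongDual ℝ V} {v : V} (hv : v ≠ 0) :
    Projectivization.mk ℝ v hv ∈ hyperplane f ↔ f v = 0 := by
  rw [hyperplane, Set.mem_ofPred_eq, Projectivization.submodule_mk,
    Submodule.span_singleton_le_iff_mem, LinearMap.mem_ker]
  rfl

theorem hyperplane_neg (f : StrongDual ℝ V) : hyperplane (-f) = hyperplane f := by
  ext k
  rw [← k.mk_rep, mk_mem_hyperplane, mk_mem_hyperplane]
  exact neg_eq_zero

/-- The double cover of `ℙ ℝ V` by the unit sphere of `V`. -/
noncomputable def sphereMk (u : Metric.sphere (0 : V) 1) : ℙ ℝ V :=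
  Projectivization.mk ℝ (u : V) (ne_zero_of_mem_unit_sphere u)

theorem sphereMk_mem_hyperplane {f : StrongDual ℝ V} {u : Metric.sphere (0 : V) 1} :
    sphereMk u ∈ hyperplane f ↔ f u = 0 :=
  mk_mem_hyperplane _

theorem sphereMk_eq_sphereMk_iff {u w : Metric.sphere (0 : V) 1} :
    sphereMk u = sphereMk w ↔ u = w ∨ u = -w := by
  rw [sphereMk, sphereMk, Projectivization.mk_eq_mk_iff']
  constructor
  · rintro ⟨a, ha⟩
    have abs_a : |a| = 1 := by
      have := congrArg norm ha
      rwa [norm_smul, norm_eq_of_mem_sphere, norm_eq_of_mem_sphere, mul_one,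
        Real.norm_eq_abs] at this
    rcases eq_or_eq_neg_of_abs_eq abs_a with rfl | rfl
    · exact Or.inl (Subtype.ext (by rw [← ha, one_smul]))
    · exact Or.inr (Subtype.ext (by rw [← ha, neg_one_smul]; rfl))
  · rintro (rfl | rfl)
    · exact ⟨1, one_smul ℝ _⟩
    · exact ⟨-1, neg_one_smul ℝ _⟩

theorem sphereMk_neg (u : Metric.sphere (0 : V) 1) : sphereMk (-u) = sphereMk u :=
  sphereMk_eq_sphereMk_iff.2 (Or.inr rfl)

theorem continuous_sphereMk : Continuous (sphereMk (V := V)) :=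
  continuous_quot_mk.comp (continuous_subtype_val.subtype_mk _)

theorem isQuotientMap_sphereMk : IsQuotientMap (sphereMk (V := V)) := by
  let normalize (v : {v : V // v ≠ 0}) : Metric.sphere (0 : V) 1 :=
    ⟨‖(v : V)‖⁻¹ • (v : V), mem_sphere_zero_iff_norm.2 (norm_smul_inv_norm v.2)⟩
  have normalize_continuous : Continuous normalize :=
    ((continuous_subtype_val.norm.inv₀ fun v => norm_ne_zero_iff.2 v.2).smul
      continuous_subtype_val).subtype_mk _
  have comp_eq : sphereMk ∘ normalize = Projectivization.mk' ℝ :=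
    funext fun v => (Projectivization.mk_eq_mk_iff' ..).2 ⟨‖(v : V)‖⁻¹, rfl⟩
  exact .of_comp normalize_continuous continuous_sphereMk (comp_eq ▸ isQuotientMap_quot_mk)

theorem isProperMap_sphereMk : IsProperMap (sphereMk (V := V)) := by
  refine isProperMap_iff_isClosedMap_and_compact_fibers.2 ⟨continuous_sphereMk, ?_, ?_⟩
  · intro C hC
    have preimage_image : sphereMk ⁻¹' (sphereMk '' C) = C ∪ -C := by
      ext u
      constructor
      · rintro ⟨w, hw, hwu⟩
        rcases sphereMk_eq_sphereMk_iff.1 hwu with rfl | rfl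
        exacts [Or.inl hw, Or.inr (by rwa [Set.mem_neg])]
      · rintro (hu | hu)
        exacts [⟨u, hu, rfl⟩, ⟨-u, hu, sphereMk_neg u⟩]
    rw [← isQuotientMap_sphereMk.isClosed_preimage, preimage_image]
    exact hC.union hC.neg
  · intro k
    obtain ⟨w, rfl⟩ := isQuotientMap_sphereMk.surjective k
    have : sphereMk ⁻¹' {sphereMk w} = {w, -w} := Set.ext fun u => sphereMk_eq_sphereMk_iff
    exact this ▸ (Set.toFinite _).isCompact

instance t2Space_projectivization : T2Space (ℙ ℝ V) := by
  have image_diagonal : Prod.map sphereMk sphereMk '' Set.diagonal (Metric.sphere (0 : V) 1) =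
      Set.diagonal (ℙ ℝ V) := by
    ext ⟨k, l⟩
    obtain ⟨u, rfl⟩ := isQuotientMap_sphereMk.surjective k
    constructor
    · rintro ⟨⟨w, w'⟩, rfl : w = w', h⟩
      exact (Prod.mk.inj h).1.symm.trans (Prod.mk.inj h).2
    · rintro (rfl : sphereMk u = l)
      exact ⟨(u, u), rfl, rfl⟩
  rw [t2_iff_isClosed_diagonal, ← image_diagonal]
  exact (isProperMap_sphereMk.prodMap isProperMap_sphereMk).isClosedMap _ isClosed_diagonal

end ProjectiveSpace

section TangentHyperplanes

open LinearAlgebra.Projectivization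

theorem exists_pos_forall_add_mul_pos {T : Type*} [TopologicalSpace T] {K : Set T}
    (hK : IsCompact K) {α β : T → ℝ} (hα : Continuous α) (hβ : Continuous β)
    (hα_nonneg : ∀ t ∈ K, 0 ≤ α t) (hβ_pos : ∀ t ∈ K, α t = 0 → 0 < β t) :
    ∃ ε > 0, ∀ t ∈ K, 0 < α t + ε * β t := by
  have near_zero : ∀ᶠ ε : ℝ in 𝓝 0, ∀ t ∈ K, t ∈ K → 0 < ε → 0 < α t + ε * β t := by
    refine hK.eventually_forall_of_forall_eventually fun t ht => ?_
    rcases (hα_nonneg t ht).eq_or_lt with h | h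
    · have β_pos_near : ∀ᶠ z : ℝ × T in 𝓝 (0, t), 0 < β z.2 :=
        (hβ.comp continuous_snd).continuousAt.eventually (lt_mem_nhds (hβ_pos t ht h.symm))
      filter_upwards [β_pos_near] with z hβz hz hε
      exact add_pos_of_nonneg_of_pos (hα_nonneg _ hz) (mul_pos hε hβz)
    · have sum_continuous : Continuous fun z : ℝ × T => α z.2 + z.1 * β z.2 := by fun_prop
      have sum_pos_near : ∀ᶠ z : ℝ × T in 𝓝 (0, t), 0 < α z.2 + z.1 * β z.2 :=
        sum_continuous.continuousAt.eventually (lt_mem_nhds (by simpa using h))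
      exact sum_pos_near.mono fun z hz _ _ => hz
  obtain ⟨ε, hε, hpos⟩ :=
    ((near_zero.filter_mono nhdsWithin_le_nhds).and (self_mem_nhdsWithin (s := Set.Ioi 0))).exists
  exact ⟨ε, hpos, fun t ht => hε t ht ht hpos⟩

variable {V : Type*} [NormedAddCommGroup V] [NormedSpace ℝ V] {K : Set (ℙ ℝ V)}
  {f : StrongDual ℝ V} {v w : Metric.sphere (0 : V) 1}

theorem apply_eq_zero_iff_of_inter_hyperplane_eq (h : K ∩ hyperplane f = {sphereMk v})
    (hw : sphereMk w ∈ K) : f w = 0 ↔ w = v ∨ w = -v := by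
  rw [← sphereMk_eq_sphereMk_iff, ← Set.mem_singleton_iff (b := sphereMk v), ← h,
    Set.mem_inter_iff, sphereMk_mem_hyperplane, and_iff_right hw]

theorem exists_disjoint_hyperplane_of_notMem_closure (hK : IsCompact K)
    (h : K ∩ hyperplane f = {sphereMk v})
    (hv : v ∉ closure {w | sphereMk w ∈ K ∧ 0 < f w}) :
    ∃ φ : StrongDual ℝ V, Disjoint K (hyperplane φ) := by
  obtain ⟨ψ, hψ⟩ := SeparatingDual.exists_eq_one (R := ℝ) (ne_zero_of_mem_unit_sphere v)
  set C := closure {w | sphereMk w ∈ K ∧ 0 < f w}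
  have C_subset : C ⊆ sphereMk ⁻¹' K ∩ {w | 0 ≤ f w} := by
    refine closure_minimal (fun w hw => ⟨hw.1, hw.2.le⟩) ?_
    exact (hK.isClosed.preimage continuous_sphereMk).inter
      (isClosed_le continuous_const (f.continuous.comp continuous_subtype_val))
  have C_compact : IsCompact C :=
    (isProperMap_sphereMk.isCompact_preimage hK).of_isClosed_subset isClosed_closure
      fun w hw => (C_subset hw).1
  obtain ⟨ε, hε, hφ⟩ := exists_pos_forall_add_mul_pos C_compact
    (f.continuous.comp continuous_subtype_val) ((-ψ).continuous.comp continuous_subtype_val)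
    (fun w hw => (C_subset hw).2) fun w hw hfw => by
      rcases (apply_eq_zero_iff_of_inter_hyperplane_eq h (C_subset hw).1).1 hfw with rfl | rfl
      · exact absurd hw hv
      · simp [hψ]
  have φ_pos {w : Metric.sphere (0 : V) 1} (hw : sphereMk w ∈ K) (hfw : 0 < f w) :
      0 < (f - ε • ψ) w := by
    simpa [← sub_eq_add_neg] using hφ w (subset_closure ⟨hw, hfw⟩)
  refine ⟨f - ε • ψ, Set.disjoint_left.2 fun k hk hkφ => ?_⟩
  obtain ⟨w, rfl⟩ := isQuotientMap_sphereMk.surjective k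
  rw [sphereMk_mem_hyperplane] at hkφ
  rcases lt_trichotomy (f w) 0 with hfw | hfw | hfw
  · refine (φ_pos (w := -w) (by rwa [sphereMk_neg]) (by simpa using hfw)).ne' ?_
    rw [coe_neg_sphere, map_neg, hkφ, neg_zero]
  · have hψw : ψ w = 0 := by simpa [hfw, hε.ne'] using hkφ
    rcases (apply_eq_zero_iff_of_inter_hyperplane_eq h hk).1 hfw with rfl | rfl
    · exact one_ne_zero (hψ.symm.trans hψw)
    · exact one_ne_zero (hψ.symm.trans (by simpa using hψw))
  · exact (φ_pos hk hfw).ne' hkφ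

/-- The part of the double cover of `K` on which `f` is nonnegative. When `K` meets the hyperplane
of `f` in a single point `k`, it is a copy of `K` in which `k` is doubled. -/
def halfCover (K : Set (ℙ ℝ V)) (f : StrongDual ℝ V) : Set (Metric.sphere (0 : V) 1) :=
  sphereMk ⁻¹' K ∩ {w | 0 ≤ f w}

theorem isCompact_halfCover (hK : IsCompact K) : IsCompact (halfCover K f) :=
  (isProperMap_sphereMk.isCompact_preimage hK).inter_right
    (isClosed_le continuous_const (f.continuous.comp continuous_subtype_val))

/-- The restriction of the double cover `sphereMk` to a map from the half cover onto `K`. -/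
noncomputable def halfCoverMk (K : Set (ℙ ℝ V)) (f : StrongDual ℝ V) : halfCover K f → K :=
  Set.MapsTo.restrict sphereMk _ _ fun _ hw => hw.1

theorem surjective_halfCoverMk : Function.Surjective (halfCoverMk K f) := by
  rintro ⟨k, hk⟩
  obtain ⟨w, rfl⟩ := isQuotientMap_sphereMk.surjective k
  rcases le_total 0 (f w) with hfw | hfw
  · exact ⟨⟨w, hk, hfw⟩, rfl⟩
  · exact ⟨⟨-w, by rwa [Set.mem_preimage, sphereMk_neg], by simpa using hfw⟩,
      Subtype.ext (sphereMk_neg w)⟩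

theorem isQuotientMap_halfCoverMk (hK : IsCompact K) : IsQuotientMap (halfCoverMk K f) :=
  have : CompactSpace (halfCover K f) := isCompact_iff_compactSpace.1 (isCompact_halfCover hK)
  .of_surjective_continuous surjective_halfCoverMk
    ((continuous_sphereMk.comp continuous_subtype_val).subtype_mk _)

theorem identifiesOnly_halfCoverMk {p q : halfCover K f}
    (h : K ∩ hyperplane f = {sphereMk (p : Metric.sphere (0 : V) 1)})
    (hq : (q : Metric.sphere (0 : V) 1) = -p) : IdentifiesOnly (halfCoverMk K f) p q := by
  intro x y
  have mk_eq_iff : halfCoverMk K f x = halfCoverMk K f y ↔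
      x = y ∨ (x : Metric.sphere (0 : V) 1) = -y := by
    rw [Subtype.ext_iff (a1 := x)]
    exact Subtype.ext_iff.trans sphereMk_eq_sphereMk_iff
  rw [mk_eq_iff, Sym2.eq_iff]
  refine or_congr_right ⟨fun hxy => ?_, ?_⟩
  · have hfy : f (y : Metric.sphere (0 : V) 1) = 0 := by
      refine le_antisymm ?_ y.2.2
      have hfx : 0 ≤ f (x : Metric.sphere (0 : V) 1) := x.2.2
      rwa [hxy, coe_neg_sphere, map_neg, neg_nonneg] at hfx
    rcases (apply_eq_zero_iff_of_inter_hyperplane_eq h y.2.1).1 hfy with hy | hy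
    · exact Or.inr ⟨Subtype.ext (by rw [hxy, hy, hq]), Subtype.ext hy⟩
    · exact Or.inl ⟨Subtype.ext (by rw [hxy, hy, neg_neg]), Subtype.ext (hy.trans hq.symm)⟩
  · rintro (⟨rfl, rfl⟩ | ⟨rfl, rfl⟩)
    exacts [by rw [hq, neg_neg], hq]

theorem neBot_nhdsNE_halfCover {p : halfCover K f} (hp : f (p : Metric.sphere (0 : V) 1) = 0)
    (hcl : (p : Metric.sphere (0 : V) 1) ∈ closure {w | sphereMk w ∈ K ∧ 0 < f w}) :
    NeBot (𝓝[≠] p) := by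
  rw [← mem_closure_iff_nhdsWithin_neBot]
  refine closure_subtype.2 (closure_mono ?_ hcl)
  rintro w ⟨hwK, hw⟩
  refine ⟨⟨w, hwK, hw.le⟩, ?_, rfl⟩
  rintro rfl
  exact hw.ne' hp

theorem isCut_halfCover {f₀ : StrongDual ℝ V} {y : halfCover K f₀}
    (hy : 0 < f₀ (y : Metric.sphere (0 : V) 1)) (h : K ∩ hyperplane f = {sphereMk y}) :
    IsCut y {x | 0 < f (x : Metric.sphere (0 : V) 1)}
      {x | f (x : Metric.sphere (0 : V) 1) < 0} where
  isOpen_left := isOpen_lt continuous_const (by fun_prop)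
  isOpen_right := isOpen_lt (by fun_prop) continuous_const
  disjoint := Set.disjoint_left.2 fun x (hx : 0 < f (x : Metric.sphere (0 : V) 1)) hx' =>
    hx.not_gt hx'
  union_eq := by
    ext x
    have hx : f (x : Metric.sphere (0 : V) 1) = 0 ↔ x = y := by
      rw [apply_eq_zero_iff_of_inter_hyperplane_eq h x.2.1, ← Subtype.ext_iff, or_iff_left]
      intro hxy
      have hfx : 0 ≤ f₀ (x : Metric.sphere (0 : V) 1) := x.2.2
      rw [hxy, coe_neg_sphere, map_neg] at hfx
      linarith
    exact lt_or_lt_iff_ne.trans (ne_comm.trans hx.not)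

theorem mem_closure_setOf_neg_halfCover {f₀ : StrongDual ℝ V} {y : halfCover K f₀}
    (hy : 0 < f₀ (y : Metric.sphere (0 : V) 1))
    (hcl : (y : Metric.sphere (0 : V) 1) ∈ closure {w | sphereMk w ∈ K ∧ 0 < (-f) w}) :
    y ∈ closure {x : halfCover K f₀ | f (x : Metric.sphere (0 : V) 1) < 0} := by
  have pos_open : IsOpen {w : Metric.sphere (0 : V) 1 | 0 < f₀ w} :=
    isOpen_lt continuous_const (by fun_prop)
  refine closure_subtype.2 (closure_mono ?_ (pos_open.inter_closure ⟨hy, hcl⟩))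
  rintro w ⟨(hw₀ : 0 < f₀ w), hwK, hw⟩
  exact ⟨⟨w, hwK, hw₀.le⟩, neg_pos.1 hw, rfl⟩

theorem exists_isCut_halfCover {f₀ : StrongDual ℝ V} {p q y : halfCover K f₀}
    (hp : f₀ (p : Metric.sphere (0 : V) 1) = 0) (hq : (q : Metric.sphere (0 : V) 1) = -p)
    (hy : 0 < f₀ (y : Metric.sphere (0 : V) 1)) (htan : ∃ f, K ∩ hyperplane f = {sphereMk y})
    (hcl : ∀ f : StrongDual ℝ V, K ∩ hyperplane f = {sphereMk y} →
      (y : Metric.sphere (0 : V) 1) ∈ closure {w | sphereMk w ∈ K ∧ 0 < f w}) :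
    ∃ U V, IsCut y U V ∧ p ∈ U ∧ q ∈ V ∧ y ∈ closure V := by
  obtain ⟨f, hf, hfp⟩ : ∃ f, K ∩ hyperplane f = {sphereMk y} ∧
      0 < f (p : Metric.sphere (0 : V) 1) := by
    obtain ⟨f, hf⟩ := htan
    have hfp : f (p : Metric.sphere (0 : V) 1) ≠ 0 := by
      intro hfp
      rcases (apply_eq_zero_iff_of_inter_hyperplane_eq hf p.2.1).1 hfp with h | h
      · exact hy.ne' (h ▸ hp)
      · rw [h, coe_neg_sphere, map_neg, neg_eq_zero] at hp
        exact hy.ne' hp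
    rcases hfp.lt_or_gt with h | h
    · exact ⟨-f, by rw [hyperplane_neg, hf], neg_pos.2 h⟩
    · exact ⟨f, hf, h⟩
  refine ⟨_, _, isCut_halfCover hy hf, hfp, ?_,
    mem_closure_setOf_neg_halfCover hy (hcl (-f) (by rw [hyperplane_neg, hf]))⟩
  change f (q : Metric.sphere (0 : V) 1) < 0
  rw [hq, coe_neg_sphere, map_neg]
  exact neg_neg_of_pos hfp

theorem nonempty_homeomorph_circle1_of_forall_mem_closure (hK : IsCompact K)
    (hK' : IsConnected K) (htan : ∀ k ∈ K, ∃ f : StrongDual ℝ V, K ∩ hyperplane f = {k})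
    (hcl : ∀ (f : StrongDual ℝ V) (v : Metric.sphere (0 : V) 1),
      K ∩ hyperplane f = {sphereMk v} → v ∈ closure {w | sphereMk w ∈ K ∧ 0 < f w}) :
    Nonempty (K ≃ₜ Circle1) := by
  have : PreconnectedSpace K := isPreconnected_iff_preconnectedSpace.1 hK'.isPreconnected
  have hne : K.Nonempty := hK'.nonempty
  obtain ⟨v, hv⟩ := hne.preimage isQuotientMap_sphereMk.surjective
  obtain ⟨f₀, hf₀⟩ := htan _ hv
  have zero_iff {w : Metric.sphere (0 : V) 1} (hw : sphereMk w ∈ K) : f₀ w = 0 ↔ w = v ∨ w = -v :=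
    apply_eq_zero_iff_of_inter_hyperplane_eq hf₀ hw
  have hfv : f₀ v = 0 := (zero_iff hv).2 (Or.inl rfl)
  let p : halfCover K f₀ := ⟨v, hv, hfv.ge⟩
  let q : halfCover K f₀ := ⟨-v, by rwa [Set.mem_preimage, sphereMk_neg], by simp [hfv]⟩
  have : CompactSpace (halfCover K f₀) := isCompact_iff_compactSpace.1 (isCompact_halfCover hK)
  have : NeBot (𝓝[≠] p) := neBot_nhdsNE_halfCover hfv (hcl f₀ v hf₀)
  have p_ne_q : p ≠ q := fun h => ne_neg_of_mem_unit_sphere ℝ v (congrArg Subtype.val h)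
  refine (identifiesOnly_halfCoverMk hf₀ rfl).nonempty_homeomorph_circle1 (p := p) (q := q)
    (isQuotientMap_halfCoverMk hK) p_ne_q fun y hyp hyq => ?_
  have hy : 0 < f₀ (y : Metric.sphere (0 : V) 1) := by
    refine lt_of_le_of_ne y.2.2 fun h => ?_
    rcases (zero_iff y.2.1).1 h.symm with h | h
    exacts [hyp (Subtype.ext h), hyq (Subtype.ext h)]
  exact exists_isCut_halfCover hfv rfl hy (htan _ y.2.1) fun f => hcl f y

theorem exists_disjoint_hyperplane_or_nonempty_homeomorph_circle1 (hK : IsCompact K)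
    (hK' : IsConnected K) (htan : ∀ k ∈ K, ∃ f : StrongDual ℝ V, K ∩ hyperplane f = {k}) :
    (∃ φ : StrongDual ℝ V, Disjoint K (hyperplane φ)) ∨ Nonempty (K ≃ₜ Circle1) := by
  by_cases! hcl : ∀ (f : StrongDual ℝ V) (v : Metric.sphere (0 : V) 1),
      K ∩ hyperplane f = {sphereMk v} → v ∈ closure {w | sphereMk w ∈ K ∧ 0 < f w}
  · exact Or.inr (nonempty_homeomorph_circle1_of_forall_mem_closure hK hK' htan hcl)
  · obtain ⟨f, v, hf, hv⟩ := hcl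
    exact Or.inl (exists_disjoint_hyperplane_of_notMem_closure hK hf hv)

theorem exists_disjoint_range_hyperplane {M : Type*} [TopologicalSpace M] [CompactSpace M]
    [ConnectedSpace M] (hM : IsEmpty (M ≃ₜ Circle1)) {ξ : M → ℙ ℝ V} (hξ : Continuous ξ)
    (f : M → StrongDual ℝ V) (htrans : ∀ x y, x ≠ y → ξ x ∉ hyperplane (f y)) :
    ∃ φ : StrongDual ℝ V, Disjoint (Set.range ξ) (hyperplane φ) := by
  have eq_of_mem {x y : M} (h : ξ x ∈ hyperplane (f y)) : x = y :=
    not_imp_comm.1 (htrans x y) (not_not_intro h)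
  by_cases! hmem : ∀ x, ξ x ∈ hyperplane (f x)
  · have ξ_injective : Function.Injective ξ := fun x y hxy => eq_of_mem (hxy ▸ hmem y)
    have ξ_tangent (y : M) : Set.range ξ ∩ hyperplane (f y) = {ξ y} := by
      refine Set.Subset.antisymm ?_ (Set.singleton_subset_iff.2 ⟨⟨y, rfl⟩, hmem y⟩)
      rintro _ ⟨⟨x, rfl⟩, hx⟩
      exact congrArg ξ (eq_of_mem hx)
    refine (exists_disjoint_hyperplane_or_nonempty_homeomorph_circle1 (isCompact_range hξ)
      (isConnected_range hξ) (Set.forall_mem_range.2 fun y => ⟨f y, ξ_tangent y⟩)).resolve_right ?_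
    rintro ⟨e⟩
    exact hM.false ((hξ.isClosedEmbedding ξ_injective).isEmbedding.toHomeomorph.trans e)
  · obtain ⟨y, hy⟩ := hmem
    refine ⟨f y, Set.disjoint_left.2 ?_⟩
    rintro _ ⟨x, rfl⟩ hx
    exact hy (eq_of_mem hx ▸ hx)

end TangentHyperplanes

open LinearAlgebra.Projectivization in
theorem limit_set_bounded_in_affine_chart_general {M : Type*} [TopologicalSpace M]
    [CompactSpace M] [ConnectedSpace M] (hM : IsEmpty (M ≃ₜ Circle1))
    {V : Type*} [NormedAddCommGroup V] [NormedSpace ℝ V] {ξ : M → ℙ ℝ V} (hξ : Continuous ξ)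
    (f : M → StrongDual ℝ V) (htrans : ∀ x y, x ≠ y → ξ x ∉ hyperplane (f y)) :
    ∃ φ : StrongDual ℝ V, φ ≠ 0 ∧
      ∀ (x : M) (v : V) (hv : v ≠ 0), ξ x = Projectivization.mk ℝ v hv → φ v ≠ 0 := by
  obtain ⟨φ, hφ⟩ := exists_disjoint_range_hyperplane hM hξ f htrans
  have apply_ne_zero (x : M) (v : V) (hv : v ≠ 0) (hx : ξ x = Projectivization.mk ℝ v hv) :
      φ v ≠ 0 := fun h =>
    Set.disjoint_left.1 hφ ⟨x, rfl⟩ (hx ▸ (mk_mem_hyperplane hv).2 h)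
  obtain ⟨x⟩ := ‹ConnectedSpace M›.toNonempty
  refine ⟨φ, ?_, apply_ne_zero⟩
  rintro rfl
  exact apply_ne_zero x _ (ξ x).rep_nonzero (ξ x).mk_rep.symm rfl

/-- **Proposition (limit set bounded in an affine chart).**
If `(Γ, M)` is a boundary pair with `M` connected and not homeomorphic to the circle, and
`ρ : Γ → PGL_d(ℝ)` is relatively 1-Anosov with limit maps `ξ, ξs`, then `ξ(M)` is bounded in
an affine chart: some nonzero functional is nonvanishing on all vectors spanning points
of `ξ(M)`. -/
theorem limit_set_bounded_in_affine_chart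
    {Γ M : Type} [Group Γ] [TopologicalSpace M] [MulAction Γ M]
    (hBP : IsBoundaryPair Γ M)
    (hconn : ConnectedSpace M) (hnotcircle : IsEmpty (M ≃ₜ Circle1))
    {d : ℕ} (ρ : Γ →* ProjGL d)
    (ξ ξs : M → Projectivization ℝ (Fin d → ℝ))
    (hAnosov : IsRelOneAnosovPGL ρ ξ ξs) :
    ∃ φ : (Fin d → ℝ) →ₗ[ℝ] ℝ, φ ≠ 0 ∧
      ∀ (x : M) (v : Fin d → ℝ) (hv : v ≠ 0), ξ x = Projectivization.mk ℝ v hv → φ v ≠ 0 := by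
  have := hBP.compact
  obtain ⟨φ, hφ, hφξ⟩ := limit_set_bounded_in_affine_chart_general hnotcircle
    hAnosov.continuous_fst (fun y => (dotProductBilin ℝ ℝ (ξs y).rep).toContinuousLinearMap)
    fun x y hxy hmem => by
      rw [← (ξ x).mk_rep, mk_mem_hyperplane] at hmem
      exact hAnosov.transverse x y hxy _ _ (ξ x).rep_nonzero (ξs y).rep_nonzero
        (ξ x).mk_rep.symm (ξs y).mk_rep.symm hmem
  exact ⟨φ, fun h => hφ (ContinuousLinearMap.coe_injective h), hφξ⟩
end

section
/- Let (Γ, M) be a boundary pair with M connected, and let ρ : Γ → PGL_d(ℝ) be a relatively 1-Anosov representation with limit maps ξ¹ : M → ℙ(ℝ^d) and ξ^{d−1} : M → ℙ((ℝ^d)*). Suppose ξ¹(M) is bounded in an affine chart: there is a nonzero linear functional φ : ℝ^d → ℝ with φ(v) ≠ 0 for every nonzero v spanning a point of ξ¹(M). Then ρ(Γ) preserves a properly convex domain in ℙ(ℝ^d): there exists a nonempty open convex cone C ⊆ ℝ^d with tC = C for all t > 0 and with C̄ ∩ (−C̄) = {0}, such that for every γ ∈ Γ and every g ∈ GL_d(ℝ)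 representing ρ(γ), either g·C = C or g·C = −C. -/
open Filter Topology Matrix Pointwise

/-!
Let `W` be the part of the cone over `ξ(M)` on which `φ` is positive. By connectedness of `M`,
every element of `ρ(Γ)` has a lift preserving `W`; these lifts form a group `P`. By compactness,
`W` lies in a Bishop–Phelps cone `κ ‖u‖ ≤ φ u`, and the vectors whose whole `P`-orbit stays in the
wider cone `κ / 2 * ‖u‖ ≤ φ u` form a closed salient `P`-invariant cone `K`. The domain sought is
the interior of `K`, provided it is nonempty.

To see that it is, let `T` be a nonzero limit of rescaled elements of `P`. If the underlying
sequence in `Γ` converges to `a` locally uniformly off `b`, then for `z ≠ a` the functional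
`ξs z ∘ T` spans `ξs b`, so transversality shows that `T` kills no line `ξ x` with `x ≠ b`.
Hence for `u₁, u₂ ∈ W` over distinct points of `M`, the vector `T (u₁ + u₂)` is nonzero and lies in
the narrow cone, thus in the interior of the wide one. As `T` ranges, up to scale, over a compact
set, a neighbourhood of `u₁ + u₂` is contained in `K`.
-/

section ProjectiveSpace

open scoped LinearAlgebra.Projectivization

variable {𝕜 V : Type*} [DivisionRing 𝕜] [AddCommGroup V] [Module 𝕜 V]

lemma eq_mk_of_mem_submodule {p : ℙ 𝕜 V} {u : V} (hu : u ∈ p.submodule) (hu₀ : u ≠ 0) :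
    p = Projectivization.mk 𝕜 u hu₀ := by
  rw [Projectivization.submodule_eq, Submodule.mem_span_singleton] at hu
  conv_lhs => rw [← p.mk_rep]
  rw [eq_comm, Projectivization.mk_eq_mk_iff']
  exact hu

lemma rep_mem_submodule (p : ℙ 𝕜 V) : p.rep ∈ p.submodule := by
  rw [Projectivization.submodule_eq]
  exact Submodule.mem_span_singleton_self _

lemma smul_mem_submodule_smul_iff {G : Type*} [Group G] [DistribMulAction G V]
    [SMulCommClass G 𝕜 V] (g : G) (p : ℙ 𝕜 V) (u : V) :
    g • u ∈ (g • p).submodule ↔ u ∈ p.submodule := by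
  induction p using Projectivization.ind with
  | h w hw =>
    simp only [Projectivization.smul_mk, Projectivization.submodule_mk,
      Submodule.mem_span_singleton, ← smul_comm g, smul_left_cancel_iff]

variable [TopologicalSpace V]

lemma isOpenQuotientMap_projectivization_mk' [ContinuousConstSMul 𝕜 V] :
    IsOpenQuotientMap (Projectivization.mk' 𝕜 : {v : V // v ≠ 0} → ℙ 𝕜 V) := by
  refine ⟨Quotient.mk_surjective, continuous_quotient_mk', fun U hU => ?_⟩
  let scale (t : 𝕜ˣ) (w : {v : V // v ≠ 0}) : {v : V // v ≠ 0} :=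
    ⟨t • w.1, (smul_ne_zero_iff_ne t).2 w.2⟩
  have scale_continuous (t : 𝕜ˣ) : Continuous (scale t) :=
    (continuous_subtype_val.const_smul t).subtype_mk _
  have saturation : Projectivization.mk' 𝕜 ⁻¹' (Projectivization.mk' 𝕜 '' U) =
      ⋃ t : 𝕜ˣ, scale t ⁻¹' U := by
    ext w
    simp only [Set.mem_preimage, Set.mem_image, Set.mem_iUnion, Projectivization.mk'_eq_mk,
      Projectivization.mk_eq_mk_iff]
    constructor
    · rintro ⟨u, hu, t, ht⟩
      exact ⟨t, by rwa [show scale t w = u from Subtype.ext ht]⟩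
    · rintro ⟨t, ht⟩
      exact ⟨scale t w, ht, t, rfl⟩
  change IsOpen (Projectivization.mk' 𝕜 ⁻¹' (Projectivization.mk' 𝕜 '' U))
  rw [saturation]
  exact isOpen_iUnion fun t => hU.preimage (scale_continuous t)

variable [TopologicalSpace 𝕜]

/-- The section `[w] ↦ w / f w` of projective space over the affine chart `f ≠ 0`. It takes the
junk value `0` on the hyperplane `f = 0`. -/
noncomputable def affineSection (f : V →L[𝕜] 𝕜) (p : ℙ 𝕜 V) : V :=
  (f p.rep)⁻¹ • p.rep

variable {f : V →L[𝕜] 𝕜} {p : ℙ 𝕜 V}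

lemma affineSection_mk (f : V →L[𝕜] 𝕜) {w : V} (hw : w ≠ 0) :
    affineSection f (Projectivization.mk 𝕜 w hw) = (f w)⁻¹ • w := by
  obtain ⟨a, ha⟩ := Projectivization.exists_smul_eq_mk_rep 𝕜 w hw
  rw [affineSection, ← ha, Units.smul_def, map_smul, smul_smul, smul_eq_mul,
    _root_.mul_inv_rev, inv_mul_cancel_right₀ a.ne_zero]

lemma affineSection_mem_submodule (f : V →L[𝕜] 𝕜) (p : ℙ 𝕜 V) :
    affineSection f p ∈ p.submodule :=
  p.submodule.smul_mem _ (rep_mem_submodule p)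

lemma apply_affineSection (hp : f p.rep ≠ 0) : f (affineSection f p) = 1 := by
  rw [affineSection, map_smul, smul_eq_mul, inv_mul_cancel₀ hp]

lemma affineSection_ne_zero (hp : f p.rep ≠ 0) : affineSection f p ≠ 0 :=
  smul_ne_zero (inv_ne_zero hp) p.rep_nonzero

lemma apply_smul_affineSection (hp : f p.rep ≠ 0) {u : V} (hu : u ∈ p.submodule) :
    f u • affineSection f p = u := by
  rw [Projectivization.submodule_eq, Submodule.mem_span_singleton] at hu
  obtain ⟨c, rfl⟩ := hu
  rw [affineSection, smul_smul, map_smul, smul_eq_mul, mul_inv_cancel_right₀ hp]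

lemma continuousAt_affineSection [ContinuousInv₀ 𝕜] [ContinuousSMul 𝕜 V]
    (hp : f p.rep ≠ 0) : ContinuousAt (affineSection f) p := by
  rw [← p.mk_rep, ← Projectivization.mk'_eq_mk 𝕜 ⟨p.rep, p.rep_nonzero⟩,
    ← isOpenQuotientMap_projectivization_mk'.continuousAt_comp_iff]
  have section_eq : affineSection f ∘ Projectivization.mk' 𝕜 =
      fun w : {v : V // v ≠ 0} => (f w.1)⁻¹ • w.1 :=
    funext fun w => affineSection_mk f w.2
  rw [section_eq]
  exact ((f.continuous.comp continuous_subtype_val).continuousAt.inv₀ hp).smul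
    continuous_subtype_val.continuousAt

lemma mem_submodule_of_tendsto [ContinuousInv₀ 𝕜] [T1Space 𝕜] [ContinuousSMul 𝕜 V]
    [T2Space V] [SeparatingDual 𝕜 V] {ι : Type*} {l : Filter ι} [l.NeBot]
    {q : ι → ℙ 𝕜 V} {u : ι → V} {u₀ : V} (hq : Tendsto q l (𝓝 p))
    (hu : ∀ i, u i ∈ (q i).submodule) (hlim : Tendsto u l (𝓝 u₀)) : u₀ ∈ p.submodule := by
  obtain ⟨f, hf⟩ := SeparatingDual.exists_ne_zero (R := 𝕜) p.rep_nonzero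
  have hsec : Tendsto (fun i => affineSection f (q i)) l (𝓝 (affineSection f p)) :=
    (continuousAt_affineSection hf).tendsto.comp hq
  have hchart : ∀ᶠ i in l, f (q i).rep ≠ 0 := by
    have hne : f (affineSection f p) ≠ 0 := by rw [apply_affineSection hf]; exact one_ne_zero
    filter_upwards [((f.continuous.tendsto _).comp hsec).eventually_ne hne] with i hi h
    simp [affineSection, h] at hi
  have hprod : Tendsto (fun i => f (u i) • affineSection f (q i)) l
      (𝓝 (f u₀ • affineSection f p)) := ((f.continuous.tendsto _).comp hlim).smul hsec
  have heq : u₀ = f u₀ • affineSection f p := by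
    refine tendsto_nhds_unique hlim (hprod.congr' ?_)
    filter_upwards [hchart] with i hi using apply_smul_affineSection hi (hu i)
  rw [heq]
  exact p.submodule.smul_mem _ (affineSection_mem_submodule f p)

end ProjectiveSpace

section ProperlyConvexCone

lemma add_ne_zero_of_salient {R E : Type*} [Semiring R] [PartialOrder R] [AddCommGroup E]
    [SMul R E] {K : ConvexCone R E} (hK : K.Salient) {u w : E} (hu : u ∈ K) (hw : w ∈ K)
    (hne : u ≠ 0 ∨ w ≠ 0) : u + w ≠ 0 := by
  intro h
  have hw_eq : w = -u := (neg_eq_of_add_eq_zero_right h).symm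
  have hu₀ : u ≠ 0 := hne.elim id fun hw₀ => neg_ne_zero.1 (hw_eq ▸ hw₀)
  exact hK u hu hu₀ (hw_eq ▸ hw)

variable {E : Type*} [AddCommGroup E] [Module ℝ E] [TopologicalSpace E]

/-- A cone in `E` over a properly convex domain of the projective space of `E`. -/
structure IsProperlyConvexCone (C : Set E) : Prop where
  nonempty : C.Nonempty
  isOpen : IsOpen C
  convex : Convex ℝ C
  smul_eq : ∀ t : ℝ, 0 < t → t • C = C
  closure_inter_neg : closure C ∩ -closure C = {0}

lemma isProperlyConvexCone_interior [IsTopologicalAddGroup E] [ContinuousSMul ℝ E]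
    {K : ConvexCone ℝ E} (hclosed : IsClosed (K : Set E)) (hsalient : K.Salient)
    (hne : (interior (K : Set E)).Nonempty) :
    IsProperlyConvexCone (interior (K : Set E)) := by
  have smul_coe (t : ℝ) (ht : 0 < t) : t • (K : Set E) = K := by
    ext u
    rw [Set.mem_smul_set_iff_inv_smul_mem₀ ht.ne', SetLike.mem_coe, SetLike.mem_coe,
      K.smul_mem_iff (inv_pos.2 ht)]
  have smul_interior (t : ℝ) (ht : 0 < t) : t • interior (K : Set E) = interior K := by
    rw [← interior_smul₀ ht.ne', smul_coe t ht]
  have zero_mem : (0 : E) ∈ closure (interior (K : Set E)) := by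
    obtain ⟨u, hu⟩ := hne
    have hlim : Tendsto (fun t : ℝ => t • u) (𝓝[>] 0) (𝓝 0) := by
      have hcont : Continuous fun t : ℝ => t • u := continuous_id.smul continuous_const
      exact (hcont.tendsto' 0 0 (zero_smul ℝ u)).mono_left nhdsWithin_le_nhds
    refine mem_closure_of_tendsto hlim ?_
    filter_upwards [self_mem_nhdsWithin] with t ht
    exact smul_interior t ht ▸ Set.smul_mem_smul_set hu
  have closure_subset : closure (interior (K : Set E)) ⊆ K :=
    closure_minimal interior_subset hclosed
  refine ⟨hne, isOpen_interior, K.convex.interior, smul_interior, ?_⟩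
  refine Set.Subset.antisymm (fun u ⟨hu, hu'⟩ => ?_) ?_
  · by_contra hu₀
    exact hsalient u (closure_subset hu) hu₀ (closure_subset hu')
  · rintro _ rfl
    exact ⟨zero_mem, by simpa using zero_mem⟩

end ProperlyConvexCone

section InvariantCore

variable {R E G : Type*} [Semiring R] [PartialOrder R] [AddCommGroup E] [SMul R E] [Group G]
  [DistribMulAction G E] [SMulCommClass G R E]

/-- The largest `H`-invariant convex cone contained in the convex cone `D`. -/
def invariantCore (H : Subgroup G) (D : ConvexCone R E) : ConvexCone R E where
  carrier := {u | ∀ g ∈ H, g • u ∈ D}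
  smul_mem' c hc u hu g hg := by
    rw [smul_comm]
    exact D.smul_mem hc (hu g hg)
  add_mem' u hu w hw g hg := by
    rw [smul_add]
    exact D.add_mem (hu g hg) (hw g hg)

variable {H : Subgroup G} {D : ConvexCone R E} {g : G}

lemma mem_invariantCore {u : E} : u ∈ invariantCore H D ↔ ∀ g ∈ H, g • u ∈ D := Iff.rfl

lemma smul_invariantCore (hg : g ∈ H) : g • (invariantCore H D : Set E) = invariantCore H D := by
  rw [← MulAction.mem_stabilizer_iff, MulAction.mem_stabilizer_set]
  refine fun u => ⟨fun hu h hh => ?_, fun hu h hh => ?_⟩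
  · simpa only [smul_smul, inv_mul_cancel_right] using hu (h * g⁻¹) (mul_mem hh (inv_mem hg))
  · simpa only [smul_smul] using hu (h * g) (mul_mem hh hg)

variable (H) in
lemma salient_invariantCore (hD : D.Salient) : (invariantCore H D).Salient :=
  hD.anti fun u hu => by simpa using mem_invariantCore.1 hu 1 (one_mem H)

variable [TopologicalSpace E] [ContinuousConstSMul G E]

lemma smul_interior_invariantCore (hg : g ∈ H) :
    g • interior (invariantCore H D : Set E) = interior (invariantCore H D) := by
  rw [← interior_smul, smul_invariantCore hg]

lemma isClosed_invariantCore (hD : IsClosed (D : Set E)) :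
    IsClosed (invariantCore H D : Set E) := by
  change IsClosed {u : E | ∀ g ∈ H, g • u ∈ (D : Set E)}
  simp only [Set.ofPred_forall]
  exact isClosed_biInter fun g _ => hD.preimage (continuous_const_smul g)

end InvariantCore

section BishopPhelpsCone

open scoped NNReal

variable {E : Type*} [NormedAddCommGroup E] [NormedSpace ℝ E]

/-- The Bishop–Phelps cone `κ ‖u‖ ≤ f u` around a direction where `f` is positive; it widens as
`κ` decreases. -/
def bishopPhelpsCone (f : E →L[ℝ] ℝ) (κ : ℝ≥0) : ConvexCone ℝ E where
  carrier := {u | κ * ‖u‖ ≤ f u}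
  smul_mem' c hc u hu := by
    simp only [Set.mem_ofPred_eq, norm_smul, Real.norm_of_nonneg hc.le, map_smul, smul_eq_mul,
      mul_left_comm _ c] at hu ⊢
    gcongr
  add_mem' u hu w hw := calc
    κ * ‖u + w‖ ≤ κ * ‖u‖ + κ * ‖w‖ := by rw [← mul_add]; gcongr; exact norm_add_le u w
    _ ≤ f u + f w := add_le_add hu hw
    _ = f (u + w) := (map_add f u w).symm

variable {f : E →L[ℝ] ℝ} {κ κ' : ℝ≥0}

lemma mem_bishopPhelpsCone {u : E} : u ∈ bishopPhelpsCone f κ ↔ κ * ‖u‖ ≤ f u := Iff.rfl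

lemma isClosed_bishopPhelpsCone : IsClosed (bishopPhelpsCone f κ : Set E) :=
  isClosed_le (continuous_const.mul continuous_norm) f.continuous

lemma pointed_bishopPhelpsCone : (bishopPhelpsCone f κ).Pointed := by
  simp [ConvexCone.Pointed, mem_bishopPhelpsCone]

lemma pos_of_mem_bishopPhelpsCone (hκ : 0 < κ) {u : E} (hu : u ∈ bishopPhelpsCone f κ)
    (hu₀ : u ≠ 0) : 0 < f u :=
  (mul_pos (NNReal.coe_pos.2 hκ) (norm_pos_iff.2 hu₀)).trans_le hu

lemma salient_bishopPhelpsCone (hκ : 0 < κ) : (bishopPhelpsCone f κ).Salient := by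
  intro u hu hu₀ hu'
  have hneg := pos_of_mem_bishopPhelpsCone hκ hu' (neg_ne_zero.2 hu₀)
  rw [map_neg, Left.neg_pos_iff] at hneg
  exact (pos_of_mem_bishopPhelpsCone hκ hu hu₀).not_gt hneg

lemma mem_interior_bishopPhelpsCone (hκ : κ' < κ) {u : E} (hu : u ∈ bishopPhelpsCone f κ)
    (hu₀ : u ≠ 0) : u ∈ interior (bishopPhelpsCone f κ' : Set E) := by
  have hopen : IsOpen {w : E | κ' * ‖w‖ < f w} :=
    isOpen_lt (continuous_const.mul continuous_norm) f.continuous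
  have hsub : {w : E | κ' * ‖w‖ < f w} ⊆ bishopPhelpsCone f κ' :=
    fun w (hw : _ < _) => mem_bishopPhelpsCone.2 hw.le
  refine interior_maximal hsub hopen ?_
  exact (mul_lt_mul_of_pos_right (NNReal.coe_lt_coe.2 hκ) (norm_pos_iff.2 hu₀)).trans_le hu

end BishopPhelpsCone

section Matrix

lemma neg_units_smul_set {R E : Type*} [Ring R] [AddCommGroup E] [Module R E] (g : Rˣ)
    (C : Set E) : -g • C = -(g • C) := by
  simp only [← Set.image_smul, ← Set.image_neg_eq_neg, Set.image_image, Units.neg_smul]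

variable {m n : Type*} [Fintype n]

instance continuousConstSMul_generalLinearGroup {R : Type*} [DecidableEq n] [CommRing R]
    [TopologicalSpace R] [IsTopologicalSemiring R] : ContinuousConstSMul (GL n R) (n → R) where
  continuous_const_smul _ := continuous_const.matrix_mulVec continuous_id

/-- The cone of positive multiples of the matrices in a group; up to positive scale, the nonzero
matrices in its closure are the projective limits of elements of the group. -/
def positiveMultiples [DecidableEq n] (H : Subgroup (GL n ℝ)) : Set (Matrix n n ℝ) :=
  {A | ∃ t : ℝ, 0 < t ∧ ∃ g ∈ H, t • (g : Matrix n n ℝ) = A}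

lemma smul_mem_positiveMultiples [DecidableEq n] {H : Subgroup (GL n ℝ)} {t : ℝ} (ht : 0 < t)
    {A : Matrix n n ℝ} (hA : A ∈ positiveMultiples H) : t • A ∈ positiveMultiples H := by
  obtain ⟨s, hs, g, hg, rfl⟩ := hA
  exact ⟨t * s, mul_pos ht hs, g, hg, mul_smul t s _⟩

open scoped Matrix.Norms.Elementwise in
/-- Rescaling to norm one makes the operators range over a compact set. -/
lemma eventually_forall_mulVec_mem [Finite m] {S : Set (Matrix m n ℝ)}
    (hS : ∀ t : ℝ, 0 < t → ∀ A ∈ S, t • A ∈ S) {D : ConvexCone ℝ (m → ℝ)} (hD : D.Pointed)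
    {p : n → ℝ} (hp : ∀ T ∈ closure S, T ≠ 0 → T *ᵥ p ∈ interior (D : Set (m → ℝ))) :
    ∀ᶠ w in 𝓝 p, ∀ A ∈ S, A *ᵥ w ∈ D := by
  cases nonempty_fintype m
  have hcompact : IsCompact (closure S ∩ Metric.sphere 0 1) :=
    (isCompact_sphere 0 1).inter_left isClosed_closure
  have hlocal : ∀ T ∈ closure S ∩ Metric.sphere 0 1,
      ∀ᶠ z : (n → ℝ) × Matrix m n ℝ in 𝓝 (p, T), z.2 *ᵥ z.1 ∈ D := by
    rintro T ⟨hT, hT₁⟩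
    have hcont : Continuous fun z : (n → ℝ) × Matrix m n ℝ => z.2 *ᵥ z.1 :=
      continuous_snd.matrix_mulVec continuous_fst
    exact hcont.continuousAt (mem_interior_iff_mem_nhds.1
      (hp T hT (ne_zero_of_mem_unit_sphere ⟨T, hT₁⟩)))
  filter_upwards [hcompact.eventually_forall_of_forall_eventually
    (P := fun w T => T *ᵥ w ∈ D) hlocal] with w hw A hA
  rcases eq_or_ne A 0 with rfl | hA₀
  · rw [zero_mulVec]
    exact hD
  have hnorm : 0 < ‖A‖⁻¹ := inv_pos.2 (norm_pos_iff.2 hA₀)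
  have hmem := hw (‖A‖⁻¹ • A)
    ⟨subset_closure (hS _ hnorm A hA), by
      rw [mem_sphere_zero_iff_norm]; exact norm_smul_inv_norm (𝕜 := ℝ) hA₀⟩
  rwa [smul_mulVec, D.smul_mem_iff hnorm] at hmem

end Matrix

section ProjGL

variable {d : ℕ} {g h : GL (Fin d) ℝ}

lemma ProjGL.coe_neg (g : GL (Fin d) ℝ) : ((-g : GL (Fin d) ℝ) : ProjGL d) = g := by
  rw [eq_comm, QuotientGroup.eq, Subgroup.mem_center_iff]
  intro h
  simp

lemma ProjGL.exists_smul_eq_of_coe_eq (e : (g : ProjGL d) = h) :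
    ∃ c : ℝ, (h : Matrix (Fin d) (Fin d) ℝ) = c • (g : Matrix (Fin d) (Fin d) ℝ) := by
  rw [QuotientGroup.eq, Matrix.GeneralLinearGroup.mem_center_iff_val_mem_range_scalar] at e
  obtain ⟨c, hc⟩ := e
  refine ⟨c, ?_⟩
  calc (h : Matrix (Fin d) (Fin d) ℝ) = (g * (g⁻¹ * h) : GL (Fin d) ℝ) := by
        rw [mul_inv_cancel_left]
    _ = c • (g : Matrix (Fin d) (Fin d) ℝ) := by
        rw [Units.val_mul, ← hc, Matrix.scalar_apply, ← Matrix.smul_one_eq_diagonal,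
          mul_smul_comm, mul_one]

end ProjGL

section ConvergenceAction

variable {Γ M : Type} [TopologicalSpace M]

lemma ConvLocUnif.tendsto_smul [SMul Γ M] {γ : ℕ → Γ} {a b z : M} (h : ConvLocUnif γ a b)
    (hz : z ≠ b) : Tendsto (fun n => γ n • z) atTop (𝓝 a) :=
  fun U hU => (h {z} isCompact_singleton hz.symm U hU).mono fun _ hn => hn z rfl

lemma ConvLocUnif.tendsto_inv_smul [Group Γ] [MulAction Γ M] [CompactSpace M] [T1Space M]
    {γ : ℕ → Γ} {a b z : M} (h : ConvLocUnif γ a b) (hz : z ≠ a) :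
    Tendsto (fun n => (γ n)⁻¹ • z) atTop (𝓝 b) := by
  refine (nhds_basis_opens b).tendsto_right_iff.2 fun U ⟨hbU, hU⟩ => ?_
  have hUc := h Uᶜ hU.isClosed_compl.isCompact (not_not.2 hbU) {z}ᶜ
    (isOpen_compl_singleton.mem_nhds hz.symm)
  filter_upwards [hUc] with n hn
  by_contra hmem
  exact hn _ hmem (smul_inv_smul (γ n) z)

lemma IsConvergenceAction.exists_subseq [Group Γ] [MulAction Γ M]
    (h : IsConvergenceAction Γ M) (γ : ℕ → Γ) :
    ∃ k : ℕ → ℕ, StrictMono k ∧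
      ((∃ γ₀, ∀ n, γ (k n) = γ₀) ∨ ∃ a b : M, ConvLocUnif (fun n => γ (k n)) a b) := by
  obtain ⟨k, hconst | hne⟩ := exists_increasing_or_nonincreasing_subseq (· = ·) γ
  · exact ⟨fun n => k (n + 1), k.strictMono.comp (strictMono_id.add_const 1),
      .inl ⟨γ (k 0), fun n => (hconst 0 (n + 1) n.succ_pos).symm⟩⟩
  · obtain ⟨j, hj, hab⟩ := h.2 (fun n => γ (k n)) (.of_lt_imp_ne hne)
    exact ⟨fun n => k (j n), k.strictMono.comp hj, .inr hab⟩

lemma IsBoundaryPair.nontrivial [Group Γ] [MulAction Γ M] [Nonempty M]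
    (h : IsBoundaryPair Γ M) : Nontrivial M := by
  inhabit M
  have : NeBot (𝓝[≠] (default : M)) := h.perfect default
  obtain ⟨x, hx⟩ := (𝓝[≠] (default : M)).nonempty_of_mem self_mem_nhdsWithin
  exact nontrivial_of_ne x default hx

end ConvergenceAction

section AnosovLimits

lemma exists_apply_ne_zero_and_apply_ne_zero {R A B C : Type*} [Semiring R] [AddCommMonoid A]
    [AddCommMonoid B] [AddCommMonoid C] [Module R A] [Module R B] [Module R C]
    {f : A →ₗ[R] B} {g : A →ₗ[R] C} (hf : f ≠ 0) (hg : g ≠ 0) : ∃ a, f a ≠ 0 ∧ g a ≠ 0 := by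
  obtain ⟨a, ha⟩ := DFunLike.ne_iff.1 hf
  obtain ⟨b, hb⟩ := DFunLike.ne_iff.1 hg
  by_cases hga : g a = 0
  · by_cases hfb : f b = 0
    · exact ⟨a + b, by simpa [hfb] using ha, by simpa [hga] using hb⟩
    · exact ⟨b, hfb, hb⟩
  · exact ⟨a, ha, hga⟩

/-- The scalar multiples of the lifts of elements of `ρ(Γ)` to `GL_d(ℝ)`; up to scale, the nonzero
matrices in its closure are the projective limits of elements of `ρ(Γ)`. -/
def rescaledLifts {Γ : Type*} [Group Γ] {d : ℕ} (ρ : Γ →* ProjGL d) :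
    Set (Matrix (Fin d) (Fin d) ℝ) :=
  {A | ∃ (t : ℝ) (γ : Γ) (g : GL (Fin d) ℝ), (g : ProjGL d) = ρ γ ∧
    t • (g : Matrix (Fin d) (Fin d) ℝ) = A}

namespace IsRelOneAnosovPGL

variable {Γ M : Type} [Group Γ] [TopologicalSpace M] [MulAction Γ M] {d : ℕ}
  {ρ : Γ →* ProjGL d} {ξ ξs : M → Projectivization ℝ (Fin d → ℝ)}

lemma map_smul_fst (h : IsRelOneAnosovPGL ρ ξ ξs) {γ : Γ} {g : GL (Fin d) ℝ}
    (hg : (g : ProjGL d) = ρ γ) (x : M) : ξ (γ • x) = g • ξ x := by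
  conv_rhs => rw [← (ξ x).mk_rep, Projectivization.smul_mk]
  exact h.equivariant_fst γ g hg x _ (ξ x).rep_nonzero _ (ξ x).mk_rep.symm

lemma vecMul_mem_submodule (h : IsRelOneAnosovPGL ρ ξ ξs) {γ : Γ} {g : GL (Fin d) ℝ}
    (hg : (g : ProjGL d) = ρ γ) {x : M} {ψ : Fin d → ℝ} (hψ : ψ ∈ (ξs x).submodule) :
    ψ ᵥ* (g : Matrix (Fin d) (Fin d) ℝ) ∈ (ξs (γ⁻¹ • x)).submodule := by
  rcases eq_or_ne ψ 0 with rfl | hψ₀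
  · simp
  have hψg : ψ ᵥ* (g : Matrix (Fin d) (Fin d) ℝ) ≠ 0 := fun h₀ => hψ₀ <|
    vecMul_injective_of_isUnit g.isUnit (h₀.trans (zero_vecMul _).symm)
  have hginv : ((g⁻¹ : GL (Fin d) ℝ) : ProjGL d) = ρ γ⁻¹ := by
    rw [QuotientGroup.mk_inv, hg, map_inv]
  rw [h.equivariant_snd γ⁻¹ g⁻¹ hginv x ψ hψ₀ (by rwa [inv_inv]) (eq_mk_of_mem_submodule hψ hψ₀),
    Projectivization.submodule_mk, inv_inv]
  exact Submodule.mem_span_singleton_self _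

lemma dotProduct_ne_zero (h : IsRelOneAnosovPGL ρ ξ ξs) {x y : M} (hxy : x ≠ y)
    {u ψ : Fin d → ℝ} (hu : u ∈ (ξ x).submodule) (hu₀ : u ≠ 0)
    (hψ : ψ ∈ (ξs y).submodule) (hψ₀ : ψ ≠ 0) : ψ ⬝ᵥ u ≠ 0 :=
  h.transverse x y hxy u ψ hu₀ hψ₀ (eq_mk_of_mem_submodule hu hu₀)
    (eq_mk_of_mem_submodule hψ hψ₀)

section RescaledLimit

variable [CompactSpace M] [T1Space M] {γ : ℕ → Γ} {a b : M} {g : ℕ → GL (Fin d) ℝ}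
  {t : ℕ → ℝ} {T : Matrix (Fin d) (Fin d) ℝ}

lemma mulVec_limit_mem_submodule (h : IsRelOneAnosovPGL ρ ξ ξs) (hγ : ConvLocUnif γ a b)
    (hg : ∀ n, (g n : ProjGL d) = ρ (γ n))
    (hT : Tendsto (fun n => t n • (g n : Matrix (Fin d) (Fin d) ℝ)) atTop (𝓝 T))
    {ψ u : Fin d → ℝ} (hψ : ψ ∈ (ξs b).submodule) (hψu : ψ ⬝ᵥ u ≠ 0) :
    T *ᵥ u ∈ (ξ a).submodule := by
  have hψ₀ : ψ ≠ 0 := by rintro rfl; exact hψu (zero_dotProduct u)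
  have hu₀ : u ≠ 0 := by rintro rfl; exact hψu (dotProduct_zero ψ)
  have hgu (n : ℕ) : (g n : Matrix (Fin d) (Fin d) ℝ) *ᵥ u ≠ 0 := fun h₀ => hu₀ <|
    mulVec_injective_of_isUnit (g n).isUnit (h₀.trans (mulVec_zero _).symm)
  have hlim := h.dynamics γ a b (fun z => hγ.tendsto_smul) (fun z => hγ.tendsto_inv_smul) g hg
    ψ hψ₀ (eq_mk_of_mem_submodule hψ hψ₀) u hgu hψu
  refine mem_submodule_of_tendsto hlim (fun n => ?_)
    (((continuous_id.matrix_mulVec continuous_const).tendsto T).comp hT)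
  rw [Projectivization.submodule_mk, Function.comp_apply, id_eq, smul_mulVec]
  exact Submodule.smul_mem _ _ (Submodule.mem_span_singleton_self _)

lemma vecMul_limit_mem_submodule (h : IsRelOneAnosovPGL ρ ξ ξs) (hγ : ConvLocUnif γ a b)
    (hg : ∀ n, (g n : ProjGL d) = ρ (γ n))
    (hT : Tendsto (fun n => t n • (g n : Matrix (Fin d) (Fin d) ℝ)) atTop (𝓝 T))
    {z : M} (hz : z ≠ a) {ψ : Fin d → ℝ} (hψ : ψ ∈ (ξs z).submodule) :
    ψ ᵥ* T ∈ (ξs b).submodule := by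
  have hlim : Tendsto (fun n => ξs ((γ n)⁻¹ • z)) atTop (𝓝 (ξs b)) :=
    (h.continuous_snd.tendsto b).comp (hγ.tendsto_inv_smul hz)
  refine mem_submodule_of_tendsto hlim (fun n => ?_)
    (((continuous_const.matrix_vecMul continuous_id).tendsto T).comp hT)
  rw [Function.comp_apply, id_eq, vecMul_smul]
  exact Submodule.smul_mem _ _ (h.vecMul_mem_submodule (hg n) hψ)

/-- For `z ≠ a`, the functional `ξs z ∘ T` spans `ξs b`, and `ξs b` does not vanish on `ξ x`. -/
lemma mulVec_limit_ne_zero [Nontrivial M] (h : IsRelOneAnosovPGL ρ ξ ξs)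
    (hγ : ConvLocUnif γ a b) (hg : ∀ n, (g n : ProjGL d) = ρ (γ n))
    (hT : Tendsto (fun n => t n • (g n : Matrix (Fin d) (Fin d) ℝ)) atTop (𝓝 T)) (hT₀ : T ≠ 0)
    {x : M} (hx : x ≠ b) {u : Fin d → ℝ} (hu : u ∈ (ξ x).submodule) (hu₀ : u ≠ 0) :
    T *ᵥ u ≠ 0 := by
  obtain ⟨z, hz⟩ := exists_ne a
  set ψz := (ξs z).rep
  set ψb := (ξs b).rep
  have hψb : ψb ∈ (ξs b).submodule := rep_mem_submodule _
  obtain ⟨c, hc⟩ : ∃ c : ℝ, c • ψb = ψz ᵥ* T := by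
    rw [← Submodule.mem_span_singleton, ← Projectivization.submodule_eq]
    exact h.vecMul_limit_mem_submodule hγ hg hT hz (rep_mem_submodule _)
  have pairing (w : Fin d → ℝ) : ψz ⬝ᵥ T *ᵥ w = c * (ψb ⬝ᵥ w) := by
    rw [dotProduct_mulVec, ← hc, smul_dotProduct, smul_eq_mul]
  have hc₀ : c ≠ 0 := by
    obtain ⟨w, hTw, hψw⟩ : ∃ w, T *ᵥ w ≠ 0 ∧ ψb ⬝ᵥ w ≠ 0 :=
      exists_apply_ne_zero_and_apply_ne_zero (f := toLin' T) (g := dotProductBilin ℝ ℝ ψb)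
        (toLin'.map_ne_zero_iff.2 hT₀) fun h₀ => (ξs b).rep_nonzero <|
          dotProduct_eq_zero _ fun w => LinearMap.congr_fun h₀ w
    have hTw_mem := h.mulVec_limit_mem_submodule hγ hg hT hψb hψw
    have hne := h.dotProduct_ne_zero hz.symm hTw_mem hTw (rep_mem_submodule _)
      (ξs z).rep_nonzero
    exact left_ne_zero_of_mul (pairing w ▸ hne)
  intro hTu
  have hzero := pairing u
  rw [hTu, dotProduct_zero, eq_comm] at hzero
  exact mul_ne_zero hc₀ (h.dotProduct_ne_zero hx hu hu₀ hψb (ξs b).rep_nonzero) hzero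

end RescaledLimit

lemma exists_forall_ne_mulVec_ne_zero [CompactSpace M] [T1Space M] [Nontrivial M]
    (h : IsRelOneAnosovPGL ρ ξ ξs) (hconv : IsConvergenceAction Γ M)
    {T : Matrix (Fin d) (Fin d) ℝ} (hT : T ∈ closure (rescaledLifts ρ)) (hT₀ : T ≠ 0) :
    ∃ b : M, ∀ x ≠ b, ∀ u ∈ (ξ x).submodule, u ≠ 0 → T *ᵥ u ≠ 0 := by
  have : FirstCountableTopology (Matrix (Fin d) (Fin d) ℝ) :=
    inferInstanceAs (FirstCountableTopology (Fin d → Fin d → ℝ))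
  obtain ⟨A, hA, hlim⟩ := mem_closure_iff_seq_limit.1 hT
  choose t γ g hg htg using hA
  obtain ⟨k, hk, ⟨γ₀, hγ₀⟩ | ⟨a, b, hab⟩⟩ := hconv.exists_subseq γ
  · have hspan : ∀ n, A (k n) ∈ ℝ ∙ (g (k 0) : Matrix (Fin d) (Fin d) ℝ) := by
      intro n
      obtain ⟨c, hc⟩ := ProjGL.exists_smul_eq_of_coe_eq
        (g := g (k 0)) (h := g (k n)) (by rw [hg, hg, hγ₀, hγ₀])
      rw [← htg, hc, smul_smul]
      exact Submodule.smul_mem _ _ (Submodule.mem_span_singleton_self _)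
    obtain ⟨c, rfl⟩ := Submodule.mem_span_singleton.1 <|
      (Submodule.closed_of_finiteDimensional _).mem_of_tendsto (hlim.comp hk.tendsto_atTop)
        (Eventually.of_forall hspan)
    inhabit M
    refine ⟨default, fun x _ u _ hu₀ => ?_⟩
    rw [smul_mulVec]
    refine smul_ne_zero (left_ne_zero_of_smul hT₀) fun h₀ => hu₀ ?_
    exact mulVec_injective_of_isUnit (g (k 0)).isUnit (h₀.trans (mulVec_zero _).symm)
  · have hlim' : Tendsto (fun n => t (k n) • (g (k n) : Matrix (Fin d) (Fin d) ℝ)) atTop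
        (𝓝 T) := by
      simpa only [htg] using! hlim.comp hk.tendsto_atTop
    exact ⟨b, fun x hx u hu hu₀ =>
      h.mulVec_limit_ne_zero hab (fun n => hg (k n)) hlim' hT₀ hx hu hu₀⟩

end IsRelOneAnosovPGL

end AnosovLimits

section ConeOver

open scoped NNReal LinearAlgebra.Projectivization

lemma forall_pos_or_forall_neg_of_ne_zero {X : Type*} [TopologicalSpace X] [PreconnectedSpace X]
    {f : X → ℝ} (hf : Continuous f) (hf₀ : ∀ x, f x ≠ 0) :
    (∀ x, 0 < f x) ∨ ∀ x, f x < 0 := by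
  by_contra! ⟨⟨x, hx⟩, ⟨y, hy⟩⟩
  obtain ⟨z, hz⟩ := mem_range_of_exists_le_of_exists_ge hf ⟨x, hx⟩ ⟨y, hy⟩
  exact hf₀ z hz

/-- The part of the cone over the projective set `range ξ` on which `f` is positive. -/
def coneOver {M V : Type*} [AddCommGroup V] [Module ℝ V] [TopologicalSpace V]
    (f : V →L[ℝ] ℝ) (ξ : M → ℙ ℝ V) : Set V :=
  {u | 0 < f u ∧ ∃ x, u ∈ (ξ x).submodule}

lemma affineSection_mem_coneOver {M V : Type*} [AddCommGroup V] [Module ℝ V]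
    [TopologicalSpace V] {f : V →L[ℝ] ℝ} {ξ : M → ℙ ℝ V} {x : M} (hx : f (ξ x).rep ≠ 0) :
    affineSection f (ξ x) ∈ coneOver f ξ :=
  ⟨by rw [apply_affineSection hx]; exact one_pos, x, affineSection_mem_submodule f _⟩

lemma exists_coneOver_subset_bishopPhelpsCone {M V : Type*} [TopologicalSpace M]
    [CompactSpace M] [NormedAddCommGroup V] [NormedSpace ℝ V] {f : V →L[ℝ] ℝ} {ξ : M → ℙ ℝ V}
    (hξ : Continuous ξ) (hf : ∀ x, f (ξ x).rep ≠ 0) :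
    ∃ κ : ℝ≥0, 0 < κ ∧ coneOver f ξ ⊆ bishopPhelpsCone f κ := by
  have hcont : Continuous fun x => affineSection f (ξ x) :=
    continuous_iff_continuousAt.2 fun x =>
      (continuousAt_affineSection (hf x)).comp hξ.continuousAt
  obtain ⟨R, hR, hbound⟩ := (isCompact_range hcont).isBounded.exists_pos_norm_le
  lift R to ℝ≥0 using hR.le
  refine ⟨R⁻¹, inv_pos.2 (NNReal.coe_pos.1 hR), ?_⟩
  rintro u ⟨hfu, x, hu⟩
  rw [SetLike.mem_coe, mem_bishopPhelpsCone, NNReal.coe_inv, inv_mul_le_iff₀ hR]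
  calc ‖u‖ = f u * ‖affineSection f (ξ x)‖ := by
        conv_lhs => rw [← apply_smul_affineSection (hf x) hu]
        rw [norm_smul, Real.norm_of_nonneg hfu.le]
    _ ≤ f u * R := by gcongr; exact hbound _ ⟨x, rfl⟩
    _ = R * f u := mul_comm _ _

end ConeOver

section PositiveLifts

open scoped NNReal

/-- The lifts to `GL_d(ℝ)` of elements of `ρ(Γ)` that preserve the cone over the limit set `ξ(M)`;
when `M` is connected every element of `ρ(Γ)` has such a lift. -/
def positiveLifts {Γ M : Type*} [Group Γ] {d : ℕ} (ρ : Γ →* ProjGL d)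
    (φ : (Fin d → ℝ) →L[ℝ] ℝ) (ξ : M → Projectivization ℝ (Fin d → ℝ)) :
    Subgroup (GL (Fin d) ℝ) :=
  ρ.range.comap (QuotientGroup.mk' _) ⊓ MulAction.stabilizer (GL (Fin d) ℝ) (coneOver φ ξ)

section Closure

variable {Γ M : Type*} [Group Γ] {d : ℕ} {ρ : Γ →* ProjGL d}
  {ξ : M → Projectivization ℝ (Fin d → ℝ)} {φ : (Fin d → ℝ) →L[ℝ] ℝ}

lemma positiveMultiples_positiveLifts_subset_rescaledLifts :
    positiveMultiples (positiveLifts ρ φ ξ) ⊆ rescaledLifts ρ := by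
  rintro _ ⟨t, -, g, ⟨⟨γ, hγ⟩, -⟩, rfl⟩
  exact ⟨t, γ, g, hγ.symm, rfl⟩

lemma mulVec_mem_of_mem_closure_positiveMultiples {D : ConvexCone ℝ (Fin d → ℝ)}
    (hD : IsClosed (D : Set (Fin d → ℝ))) (hcone : coneOver φ ξ ⊆ D)
    {T : Matrix (Fin d) (Fin d) ℝ}
    (hT : T ∈ closure (positiveMultiples (positiveLifts ρ φ ξ))) {u : Fin d → ℝ}
    (hu : u ∈ coneOver φ ξ) : T *ᵥ u ∈ D := by
  have hclosed : IsClosed {T : Matrix (Fin d) (Fin d) ℝ | T *ᵥ u ∈ (D : Set (Fin d → ℝ))} :=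
    hD.preimage (continuous_id.matrix_mulVec continuous_const)
  refine closure_minimal (t := {T | T *ᵥ u ∈ (D : Set (Fin d → ℝ))}) ?_ hclosed hT
  rintro _ ⟨t, ht, g, ⟨-, hg⟩, rfl⟩
  rw [Set.mem_ofPred_eq, smul_mulVec]
  exact D.smul_mem ht (hcone ((MulAction.mem_stabilizer_set.1 hg u).2 hu))

end Closure

namespace IsRelOneAnosovPGL

variable {Γ M : Type} [Group Γ] [TopologicalSpace M] [MulAction Γ M] {d : ℕ}
  {ρ : Γ →* ProjGL d} {ξ ξs : M → Projectivization ℝ (Fin d → ℝ)} {φ : (Fin d → ℝ) →L[ℝ] ℝ}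

lemma mem_positiveLifts_of_forall_pos (h : IsRelOneAnosovPGL ρ ξ ξs)
    (hφ : ∀ x, φ (ξ x).rep ≠ 0) {γ : Γ} {g : GL (Fin d) ℝ} (hg : (g : ProjGL d) = ρ γ)
    (hpos : ∀ x, 0 < φ (g • affineSection φ (ξ x))) : g ∈ positiveLifts ρ φ ξ := by
  refine ⟨⟨γ, hg.symm⟩, MulAction.mem_stabilizer_set.2 fun u => ?_⟩
  have submodule_iff (x : M) : g • u ∈ (ξ (γ • x)).submodule ↔ u ∈ (ξ x).submodule := by
    rw [h.map_smul_fst hg, smul_mem_submodule_smul_iff]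
  have pos_iff {x : M} (hu : u ∈ (ξ x).submodule) : 0 < φ (g • u) ↔ 0 < φ u := by
    conv_lhs => rw [← apply_smul_affineSection (hφ x) hu, smul_comm, map_smul, smul_eq_mul]
    exact mul_pos_iff_of_pos_right (hpos x)
  constructor
  · rintro ⟨hfu, y, hy⟩
    rw [← smul_inv_smul γ y, submodule_iff] at hy
    exact ⟨(pos_iff hy).1 hfu, _, hy⟩
  · rintro ⟨hfu, x, hx⟩
    exact ⟨(pos_iff hx).2 hfu, _, (submodule_iff x).2 hx⟩

lemma mem_positiveLifts_or_neg_mem_positiveLifts [PreconnectedSpace M]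
    (h : IsRelOneAnosovPGL ρ ξ ξs) (hφ : ∀ x, φ (ξ x).rep ≠ 0) {γ : Γ} {g : GL (Fin d) ℝ}
    (hg : (g : ProjGL d) = ρ γ) : g ∈ positiveLifts ρ φ ξ ∨ -g ∈ positiveLifts ρ φ ξ := by
  have hcont : Continuous fun x => φ (g • affineSection φ (ξ x)) :=
    φ.continuous.comp <| Continuous.const_smul (continuous_iff_continuousAt.2 fun x =>
      (continuousAt_affineSection (hφ x)).comp h.continuous_fst.continuousAt) g
  have hne (x : M) : φ (g • affineSection φ (ξ x)) ≠ 0 := by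
    have hmem : g • affineSection φ (ξ x) ∈ (ξ (γ • x)).submodule := by
      rw [h.map_smul_fst hg, smul_mem_submodule_smul_iff]
      exact affineSection_mem_submodule φ _
    intro h₀
    have hzero := apply_smul_affineSection (hφ (γ • x)) hmem
    rw [h₀, zero_smul, eq_comm, smul_eq_zero_iff_eq] at hzero
    exact affineSection_ne_zero (hφ x) hzero
  refine (forall_pos_or_forall_neg_of_ne_zero hcont hne).imp
    (h.mem_positiveLifts_of_forall_pos hφ hg) fun hneg =>
      h.mem_positiveLifts_of_forall_pos hφ ((ProjGL.coe_neg g).trans hg) fun x => ?_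
  rw [Units.neg_smul, map_neg, neg_pos]
  exact hneg x

/-- The sum of two vectors over distinct limit points is an interior point: a limit of rescaled
lifts annihilates at most one of them. -/
lemma nonempty_interior_invariantCore_positiveLifts [CompactSpace M] [T1Space M] [Nontrivial M]
    (h : IsRelOneAnosovPGL ρ ξ ξs) (hconv : IsConvergenceAction Γ M)
    (hφ : ∀ x, φ (ξ x).rep ≠ 0) {κ κ' : ℝ≥0} (hκ' : κ' < κ)
    (hcone : coneOver φ ξ ⊆ bishopPhelpsCone φ κ) :
    (interior (invariantCore (positiveLifts ρ φ ξ) (bishopPhelpsCone φ κ') :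
      Set (Fin d → ℝ))).Nonempty := by
  obtain ⟨x₁, x₂, hx⟩ := exists_pair_ne M
  set v := fun x => affineSection φ (ξ x)
  have hlimits : ∀ T ∈ closure (positiveMultiples (positiveLifts ρ φ ξ)), T ≠ 0 →
      T *ᵥ (v x₁ + v x₂) ∈ interior (bishopPhelpsCone φ κ' : Set (Fin d → ℝ)) := by
    intro T hT hT₀
    obtain ⟨b, hb⟩ := h.exists_forall_ne_mulVec_ne_zero hconv
      (closure_mono positiveMultiples_positiveLifts_subset_rescaledLifts hT) hT₀
    have hTv_ne (x : M) (hxb : x ≠ b) : T *ᵥ v x ≠ 0 :=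
      hb x hxb _ (affineSection_mem_submodule φ _) (affineSection_ne_zero (hφ x))
    have hTv_mem (x : M) : T *ᵥ v x ∈ bishopPhelpsCone φ κ :=
      mulVec_mem_of_mem_closure_positiveMultiples isClosed_bishopPhelpsCone hcone hT
        (affineSection_mem_coneOver (hφ x))
    rw [mulVec_add]
    refine mem_interior_bishopPhelpsCone hκ'
      ((bishopPhelpsCone φ κ).add_mem (hTv_mem x₁) (hTv_mem x₂)) ?_
    exact add_ne_zero_of_salient (salient_bishopPhelpsCone hκ'.pos) (hTv_mem x₁) (hTv_mem x₂)
      ((hx.ne_or_ne b).imp (hTv_ne x₁) (hTv_ne x₂))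
  refine ⟨v x₁ + v x₂, mem_interior_iff_mem_nhds.2 ?_⟩
  filter_upwards [eventually_forall_mulVec_mem (fun t ht A => smul_mem_positiveMultiples ht)
    pointed_bishopPhelpsCone hlimits] with w hw g hg
  exact hw _ ⟨1, one_pos, g, hg, one_smul _ _⟩

end IsRelOneAnosovPGL

end PositiveLifts

theorem rel_anosov_preserves_properly_convex_domain_general
    {Γ M : Type} [Group Γ] [TopologicalSpace M] [MulAction Γ M] [CompactSpace M] [T1Space M]
    [PreconnectedSpace M] [Nontrivial M] (hconv : IsConvergenceAction Γ M)
    {d : ℕ} {ρ : Γ →* ProjGL d} {ξ ξs : M → Projectivization ℝ (Fin d → ℝ)}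
    (hAnosov : IsRelOneAnosovPGL ρ ξ ξs) {φ : (Fin d → ℝ) →L[ℝ] ℝ}
    (hbounded : ∀ x, φ (ξ x).rep ≠ 0) :
    ∃ C : Set (Fin d → ℝ), IsProperlyConvexCone C ∧
      ∀ (γ : Γ) (g : GL (Fin d) ℝ), (g : ProjGL d) = ρ γ → g • C = C ∨ g • C = -C := by
  obtain ⟨κ, hκ, hcone⟩ :=
    exists_coneOver_subset_bishopPhelpsCone hAnosov.continuous_fst hbounded
  set K := invariantCore (positiveLifts ρ φ ξ) (bishopPhelpsCone φ (κ / 2))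
  refine ⟨interior K, isProperlyConvexCone_interior
    (isClosed_invariantCore isClosed_bishopPhelpsCone)
    (salient_invariantCore _ (salient_bishopPhelpsCone (half_pos hκ)))
    (hAnosov.nonempty_interior_invariantCore_positiveLifts hconv hbounded
      (NNReal.half_lt_self hκ.ne') hcone), fun γ g hg => ?_⟩
  refine (hAnosov.mem_positiveLifts_or_neg_mem_positiveLifts hbounded hg).imp
    smul_interior_invariantCore fun hneg => ?_
  rw [← neg_eq_iff_eq_neg, ← neg_units_smul_set]
  exact smul_interior_invariantCore hneg

/-- **Proposition (preserving a properly convex domain).**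
If `(Γ, M)` is a boundary pair with `M` connected, `ρ : Γ → PGL_d(ℝ)` is relatively 1-Anosov
with limit maps `ξ, ξs`, and `ξ(M)` is bounded in an affine chart, then `ρ(Γ)` preserves a
properly convex domain in `ℙ(ℝ^d)`, i.e. there is a properly convex open cone `C ⊆ ℝ^d` such
that every lift to `GL_d(ℝ)` of every `ρ(γ)` carries `C` to `C` or to `-C`. -/
theorem rel_anosov_preserves_properly_convex_domain
    {Γ M : Type} [Group Γ] [TopologicalSpace M] [MulAction Γ M]
    (hBP : IsBoundaryPair Γ M)
    (hconn : ConnectedSpace M)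
    {d : ℕ} (ρ : Γ →* ProjGL d)
    (ξ ξs : M → Projectivization ℝ (Fin d → ℝ))
    (hAnosov : IsRelOneAnosovPGL ρ ξ ξs)
    (φ : (Fin d → ℝ) →ₗ[ℝ] ℝ) (hφ : φ ≠ 0)
    (hbounded : ∀ (x : M) (v : Fin d → ℝ) (hv : v ≠ 0),
      ξ x = Projectivization.mk ℝ v hv → φ v ≠ 0) :
    ∃ C : Set (Fin d → ℝ), C.Nonempty ∧ IsOpen C ∧ Convex ℝ C ∧
      (∀ t : ℝ, 0 < t → t • C = C) ∧
      (closure C ∩ (-closure C) = {0}) ∧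
      ∀ (γ : Γ) (g : GL (Fin d) ℝ), (g : ProjGL d) = ρ γ →
        ((fun v => (g : Matrix (Fin d) (Fin d) ℝ) *ᵥ v) '' C = C ∨
         (fun v => (g : Matrix (Fin d) (Fin d) ℝ) *ᵥ v) '' C = -C) := by
  have := hBP.compact
  have := hBP.metrizable
  have := hBP.nontrivial
  obtain ⟨C, hC, hρC⟩ := rel_anosov_preserves_properly_convex_domain_general hBP.conv hAnosov
    (φ := LinearMap.toContinuousLinearMap φ)
    fun x => hbounded x _ (ξ x).rep_nonzero (ξ x).mk_rep.symm
  exact ⟨C, hC.nonempty, hC.isOpen, hC.convex, hC.smul_eq, hC.closure_inter_neg, hρC⟩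
end
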